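/- arXiv:1901.05143 — 2 statements merged into one kernel-verified Lean document; each statement's English description precedes it below -/
import Mathlib

section
/- Fix a ∈ ℝ and let w₁ be an ω-limit orbit of ũ(·,·;a). Then for every entire solution w of (E) satisfying 0 ≤ w(x,t) ≤ ω(α,t) for all (x,t) ∈ ℝ², w₁ is steeper than w. -/
/-!
The argument is a zero-number argument, carried out through an explicit finite-difference scheme
instead of Sturmian theory. The difference of two solutions of (E) with values in `[0, B]`,
multiplied by `exp (Λ t)` with `Λ` a Lipschitz constant of `f`, solves a linear equation
`z_t = z_xx + c z` with `0 ≤ c ≤ 2 Λ`, and such solutions are limits of the explicit scheme.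

Let `P` and `N` be the discrete evolutions of the positive and negative parts of the datum. The
wedge `P i * N j - P j * N i` is antisymmetric, and its nonnegativity on `i < j` is preserved by the
scheme. Hence a solution whose datum is first `≥ 0` and then `≤ 0` keeps this sign pattern.
Moreover, if both signs occur, the wedge dominates a combination of wedges of Gaussians, and passing
to the limit shows that at every zero the slope is strictly negative. The same comparison without
wedges gives the strong maximum principle.

The Heaviside solution attains its datum only locally uniformly off `a`, so at a small time its
difference with an entire solution `0 ≤ w ≤ ω(α,·)` has the sign pattern only up to an error; this
error is bounded by a small constant, a small multiple of `(x - a)²` and a narrow Gaussian at `a`,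
all of which stay small under the evolution. Therefore `ũ - w` has the sign pattern at every
positive time. Applying this to all translates of `w` by integer multiples of the period and passing
to the limit, `w₁ - w(·, · + k T)` has the sign pattern at all times. At a crossing where the slopes
are not strictly ordered, this forces equality at all earlier times, and uniqueness extends it to
later times.
-/

open Real Filter Topology Set

noncomputable section

/-- `u` is a classical solution of `u_t = u_xx + f(t,u)` on `ℝ × I`. -/
def IsSolOn (f : ℝ → ℝ → ℝ) (u : ℝ → ℝ → ℝ) (I : Set ℝ) : Prop :=
  ∃ ut ux uxx : ℝ → ℝ → ℝ,
    (∀ x : ℝ, ∀ t ∈ I, HasDerivAt (fun s => u x s) (ut x t) t) ∧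
    (∀ x : ℝ, ∀ t ∈ I, HasDerivAt (fun y => u y t) (ux x t) x) ∧
    (∀ x : ℝ, ∀ t ∈ I, HasDerivAt (fun y => ux y t) (uxx x t) x) ∧
    ContinuousOn (fun p : ℝ × ℝ => ut p.1 p.2) (Set.univ ×ˢ I) ∧
    ContinuousOn (fun p : ℝ × ℝ => ux p.1 p.2) (Set.univ ×ˢ I) ∧
    ContinuousOn (fun p : ℝ × ℝ => uxx p.1 p.2) (Set.univ ×ˢ I) ∧
    (∀ x : ℝ, ∀ t ∈ I, ut x t = uxx x t + f t (u x t))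

/-- `u₁` is steeper than `u₂` (Definition 2.5). -/
def Steeper (T : ℝ) (u₁ u₂ : ℝ → ℝ → ℝ) : Prop :=
  ∀ (t' x₁ : ℝ) (k : ℤ), u₁ x₁ t' = u₂ x₁ (t' + k * T) →
    (∀ x t : ℝ, u₁ x (t + t') = u₂ x (t + t' + k * T)) ∨
    deriv (fun y => u₁ y t') x₁ < deriv (fun y => u₂ y (t' + k * T)) x₁

/-- `ψ` is a `T`-periodic solution of the ODE `ω' = f(t,ω)`. -/
def IsPeriodicSol (f : ℝ → ℝ → ℝ) (T : ℝ) (ψ : ℝ → ℝ) : Prop :=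
  (∀ t : ℝ, HasDerivAt ψ (f t (ψ t)) t) ∧ ∀ t : ℝ, ψ (t + T) = ψ t

/-- `ψ` is isolated from below w.r.t. the ODE. -/
def IsolatedFromBelow (f : ℝ → ℝ → ℝ) (T : ℝ) (ψ : ℝ → ℝ) : Prop :=
  ¬ ∃ φ : ℕ → ℝ → ℝ, (∀ n, IsPeriodicSol f T (φ n)) ∧ (∀ n t, φ n t < ψ t) ∧
      TendstoUniformly φ ψ atTop

/-- `ψ` is stable from below w.r.t. the ODE. -/
def StableFromBelow (f : ℝ → ℝ → ℝ) (ψ : ℝ → ℝ) : Prop :=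
  ∀ ε > 0, ∃ δ > 0, ∀ g : ℝ → ℝ, (∀ t : ℝ, HasDerivAt g (f t (g t)) t) →
    g 0 ∈ Set.Icc (ψ 0 - δ) (ψ 0) → ∀ t ≥ 0, |g t - ψ t| ≤ ε

/-- Hypothesis (H1). -/
def HypH1 (f : ℝ → ℝ → ℝ) (α : ℝ) (ωα : ℝ → ℝ) : Prop :=
  ∃ u : ℝ → ℝ → ℝ,
    IsSolOn f u (Set.Ioi 0) ∧
    ContinuousOn (fun p : ℝ × ℝ => u p.1 p.2) (Set.univ ×ˢ Set.Ici 0) ∧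
    HasCompactSupport (fun x => u x 0) ∧
    (∀ x : ℝ, 0 ≤ u x 0 ∧ u x 0 < α) ∧
    (∀ K : Set ℝ, IsCompact K → ∀ ε > 0, ∃ t₀ : ℝ, ∀ t ≥ t₀, ∀ x ∈ K, |u x t - ωα t| < ε)

/-- Hypothesis (H2). -/
def HypH2 (f : ℝ → ℝ → ℝ) (T α : ℝ) : Prop :=
  ∀ ψ : ℝ → ℝ, IsPeriodicSol f T ψ → ψ 0 ∈ Set.Ioo 0 α →
    IsolatedFromBelow f T ψ → ¬ StableFromBelow f ψ →
    ∃ φ : ℕ → ℝ → ℝ,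
      (∀ n, ContDiff ℝ 1 (φ n)) ∧
      (∀ n t, φ n (t + T) = φ n t) ∧
      (∀ n t, f t (φ n t) ≤ deriv (φ n) t) ∧
      (∀ n t, φ n t < ψ t) ∧
      TendstoUniformly φ ψ atTop

/-- The solution `ũ(·,·;a)` of (E) with Heaviside-type initial datum `α·H(a−x)`,
bounded between `0` and `ω(α,·)`. -/
def IsHeavisideSol (f : ℝ → ℝ → ℝ) (α a : ℝ) (ωα : ℝ → ℝ) (u : ℝ → ℝ → ℝ) : Prop :=
  IsSolOn f u (Set.Ioi 0) ∧
  (∀ x : ℝ, ∀ t > 0, 0 ≤ u x t ∧ u x t ≤ ωα t) ∧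
  ∀ K : Set ℝ, IsCompact K → a ∉ K → ∀ ε > 0, ∃ δ > 0, ∀ t ∈ Set.Ioo (0:ℝ) δ, ∀ x ∈ K,
    |u x t - α * (if 0 ≤ a - x then 1 else 0)| < ε

/-- `U(x,t) → ψ(t)` as `x → +∞`, locally uniformly in `t`. -/
def LimitAtPlusInf (U : ℝ → ℝ → ℝ) (ψ : ℝ → ℝ) : Prop :=
  ∀ K : Set ℝ, IsCompact K → ∀ ε > 0, ∃ M : ℝ, ∀ x ≥ M, ∀ t ∈ K, |U x t - ψ t| < ε

/-- `U(x,t) → ψ(t)` as `x → −∞`, locally uniformly in `t`. -/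
def LimitAtMinusInf (U : ℝ → ℝ → ℝ) (ψ : ℝ → ℝ) : Prop :=
  ∀ K : Set ℝ, IsCompact K → ∀ ε > 0, ∃ M : ℝ, ∀ x ≤ M, ∀ t ∈ K, |U x t - ψ t| < ε

/-- `U` connects `ωa` (at `x = −∞`) to `ωb` (at `x = +∞`). -/
def Connects (U : ℝ → ℝ → ℝ) (ωa ωb : ℝ → ℝ) : Prop :=
  LimitAtMinusInf U ωa ∧ LimitAtPlusInf U ωb

/-- A pulsating traveling front of (E) with speed `c`, limit `ωa` at `−∞`, `ωb` at `+∞`. -/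
def IsPulsatingFront (f : ℝ → ℝ → ℝ) (T : ℝ) (ωa ωb : ℝ → ℝ) (U : ℝ → ℝ → ℝ) (c : ℝ) :
    Prop :=
  IsSolOn f U Set.univ ∧
  (∃ L : ℝ, c = L / T ∧ ∀ x t : ℝ, U x t = U (x - L) (t + T)) ∧
  Connects U ωa ωb

/-- A propagating terrace of (E) connecting `0` to `ωα`. -/
def IsTerrace (f : ℝ → ℝ → ℝ) (T : ℝ) (ωα : ℝ → ℝ) (N : ℕ)
    (ω : ℕ → ℝ → ℝ) (U : ℕ → ℝ → ℝ → ℝ) (c : ℕ → ℝ) : Prop :=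
  1 ≤ N ∧
  (∀ k ≤ N, IsPeriodicSol f T (ω k)) ∧
  (∀ t, ω 0 t = ωα t) ∧ (∀ t, ω N t = 0) ∧
  (∀ k, k < N → ∀ t, ω (k + 1) t < ω k t) ∧
  (∀ k, 1 ≤ k → k ≤ N → IsPulsatingFront f T (ω (k - 1)) (ω k) (U k) (c k)) ∧
  0 ≤ c 1 ∧ (∀ k, 1 ≤ k → k < N → c k ≤ c (k + 1))

/-- A minimal propagating terrace (Definition 1.4). -/
def IsMinimalTerrace (f : ℝ → ℝ → ℝ) (T : ℝ) (ωα : ℝ → ℝ) (N : ℕ)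
    (ω : ℕ → ℝ → ℝ) (U : ℕ → ℝ → ℝ → ℝ) (c : ℕ → ℝ) : Prop :=
  IsTerrace f T ωα N ω U c ∧
  (∀ (N' : ℕ) (ψ : ℕ → ℝ → ℝ) (V : ℕ → ℝ → ℝ → ℝ) (c' : ℕ → ℝ),
      IsTerrace f T ωα N' ψ V c' → ∀ k ≤ N, ∃ j ≤ N', ∀ t, ω k t = ψ j t) ∧
  (∀ k, 1 ≤ k → k ≤ N → ∀ V : ℝ → ℝ → ℝ, IsSolOn f V Set.univ →
      Connects V (ω (k - 1)) (ω k) → Steeper T (U k) V)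


/-- `w` is an ω-limit orbit of the solution `u`: an entire solution obtained as a locally
uniform limit (together with `u_x`, `u_xx`, `u_t`) of space–time translates
`u(· + x_j, · + k_j T)` with `k_j → ∞`. -/
def IsOmegaLimitOrbit (f : ℝ → ℝ → ℝ) (T : ℝ) (u w : ℝ → ℝ → ℝ) : Prop :=
  IsSolOn f w Set.univ ∧
  ∃ (xj : ℕ → ℝ) (kj : ℕ → ℤ),
    Tendsto kj atTop atTop ∧
    ∀ K : Set (ℝ × ℝ), IsCompact K → ∀ ε > 0, ∃ J : ℕ, ∀ j ≥ J, ∀ p ∈ K,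
      |u (p.1 + xj j) (p.2 + (kj j : ℝ) * T) - w p.1 p.2| < ε ∧
      |deriv (fun y => u y (p.2 + (kj j : ℝ) * T)) (p.1 + xj j) -
        deriv (fun y => w y p.2) p.1| < ε ∧
      |deriv (deriv (fun y => u y (p.2 + (kj j : ℝ) * T))) (p.1 + xj j) -
        deriv (deriv (fun y => w y p.2)) p.1| < ε ∧
      |deriv (fun s => u (p.1 + xj j) s) (p.2 + (kj j : ℝ) * T) -
        deriv (fun s => w p.1 s) p.2| < ε

namespace ZeroNumber

/-! ### The explicit finite-difference scheme -/

section Scheme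

/-- One step of the explicit finite-difference scheme for `z_t = z_xx + c z` on the grid `ℤ`:
`l` is the mesh ratio `τ / h²` and `κ = τ c` is the discretised zeroth order coefficient. -/
def step (l : ℝ) (κ : ℤ → ℝ) : (ℤ → ℝ) →ₗ[ℝ] (ℤ → ℝ) where
  toFun v i := (1 - 2 * l + κ i) * v i + l * (v (i + 1) + v (i - 1))
  map_add' v w := by ext i; simp only [Pi.add_apply]; ring
  map_smul' r v := by ext i; simp only [Pi.smul_apply, smul_eq_mul, RingHom.id_apply]; ring

/-- The first `m` steps of the scheme; the coefficients `κ k` are used in step `k`. -/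
def evol (l : ℝ) (κ : ℕ → ℤ → ℝ) : ℕ → (ℤ → ℝ) →ₗ[ℝ] (ℤ → ℝ)
  | 0 => LinearMap.id
  | m + 1 => step l (κ m) ∘ₗ evol l κ m

variable {l : ℝ} {κ : ℤ → ℝ} {v w : ℤ → ℝ}

lemma step_apply (l : ℝ) (κ v : ℤ → ℝ) (i : ℤ) :
    step l κ v i = (1 - 2 * l + κ i) * v i + l * (v (i + 1) + v (i - 1)) := rfl

lemma evol_zero (l : ℝ) (κ : ℕ → ℤ → ℝ) (v : ℤ → ℝ) : evol l κ 0 v = v := rfl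

lemma evol_succ (l : ℝ) (κ : ℕ → ℤ → ℝ) (m : ℕ) (v : ℤ → ℝ) :
    evol l κ (m + 1) v = step l (κ m) (evol l κ m v) := rfl

lemma evol_heat_const (l r : ℝ) (m : ℕ) : evol l 0 m (fun _ ↦ r) = fun _ ↦ r := by
  induction m with
  | zero => rfl
  | succ m ih =>
    ext i
    simp only [evol_succ, ih, step_apply, Pi.zero_apply]
    ring

lemma evol_heat_sq (l h y : ℝ) (m : ℕ) :
    evol l 0 m (fun i : ℤ ↦ (y + h * i) ^ 2)
      = fun i : ℤ ↦ (y + h * i) ^ 2 + 2 * m * (l * h ^ 2) := by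
  induction m with
  | zero => simp [evol_zero]
  | succ m ih =>
    ext i
    simp only [evol_succ, ih, step_apply, Pi.zero_apply]
    push_cast
    ring

lemma step_le_step (hl : l ∈ Icc (0 : ℝ) (1 / 4)) {κ' : ℤ → ℝ} (hκ' : 0 ≤ κ') (hκ : κ' ≤ κ)
    (hv : 0 ≤ v) (hwv : w ≤ v) : step l κ' w ≤ step l κ v := by
  intro i
  have hκ'i : (0 : ℝ) ≤ κ' i := hκ' i
  have hdiag : 0 ≤ 1 - 2 * l + κ' i := by linarith [hl.2]
  have hcoeff : 0 ≤ (κ i - κ' i) * v i := mul_nonneg (sub_nonneg.2 (hκ i)) (hv i)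
  have hcentre := mul_le_mul_of_nonneg_left (hwv i) hdiag
  have hneighbours := mul_le_mul_of_nonneg_left (add_le_add (hwv (i + 1)) (hwv (i - 1))) hl.1
  simp only [step_apply]
  linarith

lemma abs_step_le (hl : l ∈ Icc (0 : ℝ) (1 / 4)) (hκ : 0 ≤ κ) (hvw : |v| ≤ w) :
    |step l κ v| ≤ step l κ w := by
  have hw : 0 ≤ w := (abs_nonneg v).trans hvw
  rw [abs_le', ← map_neg]
  exact ⟨step_le_step hl hκ le_rfl hw ((le_abs_self v).trans hvw),
    step_le_step hl hκ le_rfl hw ((neg_le_abs v).trans hvw)⟩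

-- The diagonal weight `1 - 2 l` is at least one half, so `1 + 2 q` absorbs the coefficient.
lemma step_le_mul_step_heat (hl : l ∈ Icc (0 : ℝ) (1 / 4)) {q : ℝ} (hq : 0 ≤ q)
    (hκ : ∀ i, κ i ≤ q) (hv : 0 ≤ v) : step l κ v ≤ (1 + 2 * q) • step l 0 v := by
  intro i
  have hcoeff := mul_le_mul_of_nonneg_right (hκ i) (hv i)
  have hdiag : 0 ≤ q * (1 - 4 * l) * v i :=
    mul_nonneg (mul_nonneg hq (by linarith [hl.2])) (hv i)
  have hneighbours : 0 ≤ q * (l * (v (i + 1) + v (i - 1))) :=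
    mul_nonneg hq (mul_nonneg hl.1 (add_nonneg (hv _) (hv _)))
  simp only [step_apply, Pi.smul_apply, Pi.zero_apply, smul_eq_mul]
  linarith

variable {κ : ℕ → ℤ → ℝ}

lemma evol_nonneg (hl : l ∈ Icc (0 : ℝ) (1 / 4)) (hκ : 0 ≤ κ) (hv : 0 ≤ v) (m : ℕ) :
    0 ≤ evol l κ m v := by
  induction m with
  | zero => exact hv
  | succ m ih =>
    simpa only [evol_succ, map_zero] using step_le_step hl (hκ m) le_rfl ih ih

lemma evol_heat_le_evol (hl : l ∈ Icc (0 : ℝ) (1 / 4)) (hκ : 0 ≤ κ) (hv : 0 ≤ v) (hwv : w ≤ v)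
    (m : ℕ) : evol l 0 m w ≤ evol l κ m v := by
  induction m with
  | zero => exact hwv
  | succ m ih => exact step_le_step hl le_rfl (hκ m) (evol_nonneg hl hκ hv m) ih

lemma abs_evol_le (hl : l ∈ Icc (0 : ℝ) (1 / 4)) {q : ℝ} (hκ : 0 ≤ κ) (hq : ∀ k i, κ k i ≤ q)
    (hvw : |v| ≤ w) (m : ℕ) : |evol l κ m v| ≤ (1 + 2 * q) ^ m • evol l 0 m w := by
  have hw : 0 ≤ w := (abs_nonneg v).trans hvw
  have hq0 : 0 ≤ q := (hκ 0 0).trans (hq 0 0)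
  induction m with
  | zero => simpa only [evol_zero, pow_zero, one_smul] using hvw
  | succ m ih =>
    have hheat : 0 ≤ evol l 0 m w := evol_nonneg hl le_rfl hw m
    calc |evol l κ (m + 1) v| ≤ step l (κ m) ((1 + 2 * q) ^ m • evol l 0 m w) :=
          abs_step_le hl (hκ m) ih
      _ = (1 + 2 * q) ^ m • step l (κ m) (evol l 0 m w) := map_smul ..
      _ ≤ (1 + 2 * q) ^ m • (1 + 2 * q) • step l 0 (evol l 0 m w) := by
          have hstep := step_le_mul_step_heat hl hq0 (hq m) hheat
          gcongr
      _ = (1 + 2 * q) ^ (m + 1) • evol l 0 (m + 1) w := by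
          rw [smul_smul, pow_succ, evol_succ, Pi.zero_apply]

end Scheme

/-! ### The two-point wedge -/

section Wedge

variable {X Y : Type*}

/-- The two-point determinant of `P` and `N`. It replaces the zero number: for the positive and
negative parts of a function it is nonnegative on `x < y` if and only if the function does not pass
from negative to positive values. -/
def wedge (P N : X → ℝ) (x y : X) : ℝ := P x * N y - P y * N x

/-- The cone of antisymmetric two-point functions which are nonnegative on `x < y`. -/
structure IsAltNonneg [Preorder X] (D : X → X → ℝ) : Prop where
  swap_eq : Function.swap D = -D
  nonneg_of_lt : ∀ ⦃x y⦄, x < y → 0 ≤ D x y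

/-- `g` does not pass from negative to positive values: it has at most one sign change, and that
one is downwards. -/
def NoUpcrossing [Preorder X] (g : X → ℝ) : Prop :=
  ∀ ⦃x y⦄, x < y → g x < 0 → g y ≤ 0

lemma swap_wedge (P N : X → ℝ) : Function.swap (wedge P N) = -wedge P N := by
  ext x y
  simp only [Function.swap, wedge, Pi.neg_apply]
  ring

namespace IsAltNonneg

lemma nonneg [PartialOrder X] {D : X → X → ℝ} (hD : IsAltNonneg D) {x y : X} (hxy : x ≤ y) :
    0 ≤ D x y := by
  rcases hxy.eq_or_lt with rfl | hlt
  · have hdiag : D x x = -D x x := congrFun₂ hD.swap_eq x x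
    linarith
  · exact hD.nonneg_of_lt hlt

lemma add [Preorder X] {D E : X → X → ℝ} (hD : IsAltNonneg D) (hE : IsAltNonneg E) :
    IsAltNonneg (D + E) where
  swap_eq := by
    rw [neg_add, ← hD.swap_eq, ← hE.swap_eq]
    rfl
  nonneg_of_lt _ _ hxy := add_nonneg (hD.nonneg_of_lt hxy) (hE.nonneg_of_lt hxy)

lemma comp_strictMono [Preorder X] [Preorder Y] {D : X → X → ℝ} (hD : IsAltNonneg D) {φ : Y → X}
    (hφ : StrictMono φ) : IsAltNonneg fun i j ↦ D (φ i) (φ j) where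
  swap_eq := by
    ext i j
    exact congrFun₂ hD.swap_eq (φ i) (φ j)
  nonneg_of_lt _ _ hij := hD.nonneg_of_lt (hφ hij)

end IsAltNonneg

lemma NoUpcrossing.isAltNonneg_wedge [Preorder X] {g : X → ℝ} (hg : NoUpcrossing g) :
    IsAltNonneg (wedge g⁺ g⁻) where
  swap_eq := swap_wedge _ _
  nonneg_of_lt x y hxy := by
    simp only [wedge, Pi.posPart_apply, Pi.negPart_apply]
    rcases le_or_gt 0 (g x) with hx | hx
    · rw [negPart_eq_zero.2 hx, mul_zero, sub_zero]
      exact mul_nonneg (posPart_nonneg _) (negPart_nonneg _)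
    · rw [posPart_eq_zero.2 (hg hxy hx), zero_mul, sub_zero]
      exact mul_nonneg (posPart_nonneg _) (negPart_nonneg _)

/-- The scheme applied in both variables of a two-point function. -/
def step₂ (l : ℝ) (κ : ℤ → ℝ) : (ℤ → ℤ → ℝ) →ₗ[ℝ] (ℤ → ℤ → ℝ) where
  toFun D i j := step l κ (fun k ↦ step l κ (D k) j) i
  map_add' D E := by
    ext i j
    simp only [step_apply, Pi.add_apply]
    ring
  map_smul' r D := by
    ext i j
    simp only [step_apply, Pi.smul_apply, smul_eq_mul, RingHom.id_apply]
    ring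

/-- The first `m` steps of the scheme applied in both variables. -/
def evol₂ (l : ℝ) (κ : ℕ → ℤ → ℝ) : ℕ → (ℤ → ℤ → ℝ) →ₗ[ℝ] (ℤ → ℤ → ℝ)
  | 0 => LinearMap.id
  | m + 1 => step₂ l (κ m) ∘ₗ evol₂ l κ m

lemma step₂_apply (l : ℝ) (κ : ℤ → ℝ) (D : ℤ → ℤ → ℝ) (i j : ℤ) :
    step₂ l κ D i j = step l κ (fun k ↦ step l κ (D k) j) i := rfl

lemma evol₂_succ (l : ℝ) (κ : ℕ → ℤ → ℝ) (m : ℕ) (D : ℤ → ℤ → ℝ) :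
    evol₂ l κ (m + 1) D = step₂ l (κ m) (evol₂ l κ m D) := rfl

lemma wedge_step (l : ℝ) (κ P N : ℤ → ℝ) :
    wedge (step l κ P) (step l κ N) = step₂ l κ (wedge P N) := by
  ext i j
  simp only [wedge, step₂_apply, step_apply]
  ring

lemma wedge_evol (l : ℝ) (κ : ℕ → ℤ → ℝ) (m : ℕ) (P N : ℤ → ℝ) :
    wedge (evol l κ m P) (evol l κ m N) = evol₂ l κ m (wedge P N) := by
  induction m with
  | zero => rfl
  | succ m ih => rw [evol_succ, evol_succ, wedge_step, ih, evol₂_succ]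

lemma swap_step₂ (l : ℝ) (κ : ℤ → ℝ) {D : ℤ → ℤ → ℝ} (hD : Function.swap D = -D) :
    Function.swap (step₂ l κ D) = -step₂ l κ D := by
  rw [← map_neg, ← hD]
  ext i j
  simp only [Function.swap, step₂_apply, step_apply]
  ring

namespace IsAltNonneg

variable {l : ℝ} {κ : ℤ → ℝ} {D B : ℤ → ℤ → ℝ}

-- The only neighbour of `(i, j)` that may cross the diagonal is `(i + 1, j - 1) = (j, i)`; its
-- negative contribution is absorbed by that of `(i, j)`. This is the discrete Karlin–McGregor
-- non-crossing argument.
lemma centre_add_crossing_nonneg (hl : l ∈ Icc (0 : ℝ) (1 / 4)) (hD : IsAltNonneg D) {i j : ℤ}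
    (hij : i < j) : 0 ≤ (1 - 2 * l) ^ 2 * D i j + l ^ 2 * D (i + 1) (j - 1) := by
  have hcentre := hD.nonneg hij.le
  rcases (show i + 1 ≤ j from hij).eq_or_lt with rfl | hlt
  · have hcross : D (i + 1) i = -D i (i + 1) := congrFun₂ hD.swap_eq i (i + 1)
    have hweights : 0 ≤ (1 - 2 * l) ^ 2 - l ^ 2 := by nlinarith [hl.1, hl.2]
    rw [add_sub_cancel_right, hcross]
    linarith [mul_nonneg hweights hcentre]
  · have hcross := hD.nonneg (x := i + 1) (y := j - 1) (by lia)
    positivity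

lemma step₂_heat (hl : l ∈ Icc (0 : ℝ) (1 / 4)) (hD : IsAltNonneg D) :
    IsAltNonneg (step₂ l 0 D) where
  swap_eq := swap_step₂ l 0 hD.swap_eq
  nonneg_of_lt i j hij := by
    have hl0 : 0 ≤ l := hl.1
    have hdiag : 0 ≤ 1 - 2 * l := by linarith [hl.2]
    have hcross := hD.centre_add_crossing_nonneg hl hij
    have hsecond : 0 ≤ (1 - 2 * l) * l * (D i (j + 1) + D i (j - 1)) :=
      mul_nonneg (by positivity) (add_nonneg (hD.nonneg (by lia)) (hD.nonneg (by lia)))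
    have hfirst : 0 ≤ l * (1 - 2 * l) * (D (i + 1) j + D (i - 1) j) :=
      mul_nonneg (by positivity) (add_nonneg (hD.nonneg (by lia)) (hD.nonneg (by lia)))
    have hcorners : 0 ≤ l ^ 2 * (D (i + 1) (j + 1) + D (i - 1) (j + 1) + D (i - 1) (j - 1)) :=
      mul_nonneg (by positivity) (add_nonneg (add_nonneg (hD.nonneg (by lia))
        (hD.nonneg (by lia))) (hD.nonneg (by lia)))
    simp only [step₂_apply, step_apply, Pi.zero_apply]
    linarith

lemma step₂_sub_heat (hl : l ∈ Icc (0 : ℝ) (1 / 4)) (hκ : 0 ≤ κ) (hD : IsAltNonneg D) :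
    IsAltNonneg (step₂ l κ D - step₂ l 0 D) where
  swap_eq := by
    rw [neg_sub', ← swap_step₂ l κ hD.swap_eq, ← swap_step₂ l 0 hD.swap_eq]
    rfl
  nonneg_of_lt i j hij := by
    have hdiff : (step₂ l κ D - step₂ l 0 D) i j
        = κ i * ((1 - 2 * l) * D i j + l * (D i (j + 1) + D i (j - 1)))
          + κ j * ((1 - 2 * l) * D i j + l * (D (i + 1) j + D (i - 1) j))
          + κ i * κ j * D i j := by
      simp only [Pi.sub_apply, step₂_apply, step_apply, Pi.zero_apply]
      ring
    have hl0 : 0 ≤ l := hl.1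
    have hdiag : 0 ≤ 1 - 2 * l := by linarith [hl.2]
    have hκi : (0 : ℝ) ≤ κ i := hκ i
    have hκj : (0 : ℝ) ≤ κ j := hκ j
    have hcentre := hD.nonneg hij.le
    have hsecond :=
      add_nonneg (hD.nonneg (show i ≤ j + 1 by lia)) (hD.nonneg (show i ≤ j - 1 by lia))
    have hfirst :=
      add_nonneg (hD.nonneg (show i + 1 ≤ j by lia)) (hD.nonneg (show i - 1 ≤ j by lia))
    rw [hdiff]
    positivity

variable {κ : ℕ → ℤ → ℝ}

lemma evol₂ (hl : l ∈ Icc (0 : ℝ) (1 / 4)) (hκ : 0 ≤ κ) (hD : IsAltNonneg D) (m : ℕ) :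
    IsAltNonneg (evol₂ l κ m D) := by
  induction m with
  | zero => exact hD
  | succ m ih => simpa only [evol₂_succ, sub_add_cancel] using
      (ih.step₂_sub_heat hl (hκ m)).add (ih.step₂_heat hl)

lemma evol₂_sub_heat (hl : l ∈ Icc (0 : ℝ) (1 / 4)) (hκ : 0 ≤ κ) (hD : IsAltNonneg D)
    (hDB : IsAltNonneg (D - B)) (m : ℕ) :
    IsAltNonneg (ZeroNumber.evol₂ l κ m D - ZeroNumber.evol₂ l 0 m B) := by
  induction m with
  | zero => exact hDB
  | succ m ih =>
    simpa only [evol₂_succ, map_sub, sub_add_sub_cancel, Pi.zero_apply] using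
      ((hD.evol₂ hl hκ m).step₂_sub_heat hl (hκ m)).add (ih.step₂_heat hl)

end IsAltNonneg

end Wedge

/-! ### Taylor estimates -/

section Taylor

variable {g g' g'' : ℝ → ℝ} {x h η : ℝ}

lemma abs_sub_sub_deriv_le (hg : ∀ y ∈ uIcc x (x + h), HasDerivAt g (g' y) y)
    (hη : ∀ y ∈ uIcc x (x + h), |g' y - g' x| ≤ η) :
    |g (x + h) - g x - h * g' x| ≤ η * |h| := by
  have hmean := (convex_uIcc x (x + h)).norm_image_sub_le_of_norm_hasDerivWithin_le
    (f := fun y ↦ g y - y * g' x) (f' := fun y ↦ g' y - 1 * g' x) (C := η)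
    (fun y hy ↦ ((hg y hy).sub ((hasDerivAt_id y).mul_const _)).hasDerivWithinAt)
    (fun y hy ↦ by simpa only [one_mul, Real.norm_eq_abs] using hη y hy)
    left_mem_uIcc right_mem_uIcc
  rw [Real.norm_eq_abs, Real.norm_eq_abs, add_sub_cancel_left] at hmean
  convert hmean using 2
  ring

lemma abs_sub_sub_deriv_sub_deriv_two_le (hg : ∀ y ∈ uIcc x (x + h), HasDerivAt g (g' y) y)
    (hg' : ∀ y ∈ uIcc x (x + h), HasDerivAt g' (g'' y) y)
    (hη : ∀ y ∈ uIcc x (x + h), |g'' y - g'' x| ≤ η) :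
    |g (x + h) - g x - h * g' x - h ^ 2 / 2 * g'' x| ≤ η * h ^ 2 := by
  have hη0 : 0 ≤ η := (abs_nonneg _).trans (hη x left_mem_uIcc)
  have hslope (y : ℝ) (hy : y ∈ uIcc x (x + h)) :
      |g' y - g' x - (y - x) * g'' x| ≤ η * |h| := by
    have hsub : uIcc x (x + (y - x)) ⊆ uIcc x (x + h) := by
      rw [add_sub_cancel]
      exact uIcc_subset_uIcc_left hy
    have hy' := abs_sub_sub_deriv_le (fun s hs ↦ hg' s (hsub hs)) fun s hs ↦ hη s (hsub hs)
    rw [add_sub_cancel] at hy'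
    refine hy'.trans (mul_le_mul_of_nonneg_left ?_ hη0)
    simpa only [add_sub_cancel_left] using abs_sub_left_of_mem_uIcc hy
  have hsq (y : ℝ) : HasDerivAt (fun y ↦ (y - x) ^ 2 / 2 * g'' x) ((y - x) * g'' x) y := by
    refine (((((hasDerivAt_id y).sub_const x).pow 2).div_const 2).mul_const (g'' x)).congr_deriv ?_
    simp only [id]
    ring
  have hmain := abs_sub_sub_deriv_le (g := fun y ↦ g y - (y - x) ^ 2 / 2 * g'' x)
    (g' := fun y ↦ g' y - (y - x) * g'' x) (fun y hy ↦ (hg y hy).sub (hsq y)) fun y hy ↦ by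
      convert hslope y hy using 2
      ring
  rw [mul_assoc, abs_mul_abs_self, ← sq] at hmain
  convert hmain using 2
  ring

lemma abs_second_difference_sub_le (hg : ∀ y, HasDerivAt g (g' y) y)
    (hg' : ∀ y, HasDerivAt g' (g'' y) y)
    (hη : ∀ y, |y - x| ≤ |h| → |g'' y - g'' x| ≤ η) :
    |g (x + h) + g (x - h) - 2 * g x - h ^ 2 * g'' x| ≤ 2 * η * h ^ 2 := by
  have htaylor (k : ℝ) (hk : |k| = |h|) :
      |g (x + k) - g x - k * g' x - k ^ 2 / 2 * g'' x| ≤ η * k ^ 2 :=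
    abs_sub_sub_deriv_sub_deriv_two_le (fun y _ ↦ hg y) (fun y _ ↦ hg' y) fun y hy ↦
      hη y (by simpa only [add_sub_cancel_left, hk] using abs_sub_left_of_mem_uIcc hy)
  calc |g (x + h) + g (x - h) - 2 * g x - h ^ 2 * g'' x|
      = |(g (x + h) - g x - h * g' x - h ^ 2 / 2 * g'' x)
          + (g (x + -h) - g x - -h * g' x - (-h) ^ 2 / 2 * g'' x)| := by
        rw [← sub_eq_add_neg]
        congr 1
        ring
    _ ≤ η * h ^ 2 + η * (-h) ^ 2 :=
        (abs_add_le _ _).trans (add_le_add (htaylor h rfl) (htaylor (-h) (abs_neg h)))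
    _ = 2 * η * h ^ 2 := by ring

end Taylor

/-! ### Linear parabolic equations and convergence of the scheme -/

/-- `z` is a classical solution, bounded by `M`, of `z_t = z_xx + c z` on `ℝ × [0, T]` with
`0 ≤ c ≤ K`. The time derivative at the end points is two-sided, `c` is extended to all times, and
only `z_t` and `z_xx`, not `c`, have to be continuous. -/
structure IsLinSol (K M T : ℝ) (z c : ℝ → ℝ → ℝ) : Prop where
  abs_le_bound : ∀ x, ∀ t ∈ Icc 0 T, |z x t| ≤ M
  coeff_nonneg : ∀ x t, 0 ≤ c x t
  coeff_le : ∀ x t, c x t ≤ K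
  exists_deriv : ∃ zt zx zxx : ℝ → ℝ → ℝ,
    (∀ x, ∀ t ∈ Icc 0 T, HasDerivAt (fun s ↦ z x s) (zt x t) t) ∧
    (∀ x, ∀ t ∈ Icc 0 T, HasDerivAt (fun y ↦ z y t) (zx x t) x) ∧
    (∀ x, ∀ t ∈ Icc 0 T, HasDerivAt (fun y ↦ zx y t) (zxx x t) x) ∧
    ContinuousOn (fun p : ℝ × ℝ ↦ zt p.1 p.2) (univ ×ˢ Icc 0 T) ∧
    ContinuousOn (fun p : ℝ × ℝ ↦ zxx p.1 p.2) (univ ×ˢ Icc 0 T) ∧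
    ∀ x, ∀ t ∈ Icc 0 T, zt x t = zxx x t + c x t * z x t

/-- The coefficients `τ c` of the scheme on the grid with origin `(x₀, 0)`, mesh width `h` and time
step `τ`. -/
def gridCoeff (c : ℝ → ℝ → ℝ) (x₀ h τ : ℝ) (k : ℕ) (i : ℤ) : ℝ := τ * c (x₀ + h * i) (k * τ)

lemma gridCoeff_zero (x₀ h τ : ℝ) : gridCoeff 0 x₀ h τ = 0 := by
  ext k i
  simp only [gridCoeff, Pi.zero_apply, mul_zero]

lemma gridCoeff_nonneg {c : ℝ → ℝ → ℝ} (hc : 0 ≤ c) (x₀ h : ℝ) {τ : ℝ} (hτ : 0 ≤ τ) :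
    0 ≤ gridCoeff c x₀ h τ :=
  fun _ _ ↦ mul_nonneg hτ (hc _ _)

lemma gridCoeff_le {c : ℝ → ℝ → ℝ} {K : ℝ} (hc : ∀ x t, c x t ≤ K) (x₀ h : ℝ) {τ : ℝ}
    (hτ : 0 ≤ τ) (k : ℕ) (i : ℤ) : gridCoeff c x₀ h τ k i ≤ K * τ := by
  rw [mul_comm K]
  exact mul_le_mul_of_nonneg_left (hc _ _) hτ

lemma one_add_mul_pow_le_exp {K τ T : ℝ} (hK : 0 ≤ K) (hτ : 0 ≤ τ) {k : ℕ} (hk : k * τ ≤ T) :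
    (1 + K * τ) ^ k ≤ exp (K * T) := by
  calc (1 + K * τ) ^ k ≤ exp (K * τ) ^ k := by
        gcongr
        linarith [add_one_le_exp (K * τ)]
    _ = exp (K * (k * τ)) := by
        rw [← exp_nat_mul]
        ring_nf
    _ ≤ exp (K * T) := by gcongr

lemma exists_uniform_modulus {G : ℝ → ℝ → ℝ} {T : ℝ}
    (hG : ContinuousOn (fun p : ℝ × ℝ ↦ G p.1 p.2) (univ ×ˢ Icc 0 T)) (a b : ℝ) {ε : ℝ}
    (hε : 0 < ε) : ∃ δ > 0, ∀ x ∈ Icc a b, ∀ y ∈ Icc a b, ∀ s ∈ Icc 0 T, ∀ t ∈ Icc 0 T,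
      |x - y| < δ → |s - t| < δ → |G x s - G y t| ≤ ε := by
  have hcompact : IsCompact (Icc a b ×ˢ Icc 0 T) := isCompact_Icc.prod isCompact_Icc
  obtain ⟨δ, hδ, hunif⟩ := Metric.uniformContinuousOn_iff.1
    (hcompact.uniformContinuousOn_of_continuous (hG.mono (prod_mono_left (subset_univ _)))) ε hε
  refine ⟨δ, hδ, fun x hx y hy s hs t ht hxy hst ↦ ?_⟩
  exact (hunif (x, s) ⟨hx, hs⟩ (y, t) ⟨hy, ht⟩ (max_lt hxy hst)).le

namespace IsLinSol

variable {K M T : ℝ} {z c : ℝ → ℝ → ℝ}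

lemma coeff_bound_nonneg (hz : IsLinSol K M T z c) : 0 ≤ K :=
  (hz.coeff_nonneg 0 0).trans (hz.coeff_le 0 0)

lemma bound_nonneg (hz : IsLinSol K M T z c) (hT : 0 ≤ T) : 0 ≤ M :=
  (abs_nonneg _).trans (hz.abs_le_bound 0 0 ⟨le_rfl, hT⟩)

lemma abs_step_sub_le_of_oscillation {zt zx zxx : ℝ → ℝ → ℝ} {x t h l η : ℝ}
    (hl : l ∈ Icc (0 : ℝ) (1 / 4)) (ht0 : 0 ≤ t) (htT : t + l * h ^ 2 ≤ T)
    (hzt : ∀ x, ∀ t ∈ Icc 0 T, HasDerivAt (fun s ↦ z x s) (zt x t) t)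
    (hzx : ∀ x, ∀ t ∈ Icc 0 T, HasDerivAt (fun y ↦ z y t) (zx x t) x)
    (hzxx : ∀ x, ∀ t ∈ Icc 0 T, HasDerivAt (fun y ↦ zx y t) (zxx x t) x)
    (heq : zt x t = zxx x t + c x t * z x t)
    (hosct : ∀ s ∈ Icc t (t + l * h ^ 2), |zt x s - zt x t| ≤ η)
    (hoscx : ∀ y, |y - x| ≤ |h| → |zxx y t - zxx x t| ≤ η) :
    |(1 - 2 * l + l * h ^ 2 * c x t) * z x t + l * (z (x + h) t + z (x - h) t)
      - z x (t + l * h ^ 2)| ≤ 3 * η * (l * h ^ 2) := by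
  have hl0 : 0 ≤ l := hl.1
  have hτ : 0 ≤ l * h ^ 2 := by positivity
  have ht : t ∈ Icc 0 T := ⟨ht0, by linarith⟩
  have huIcc : uIcc t (t + l * h ^ 2) = Icc t (t + l * h ^ 2) := uIcc_of_le (by linarith)
  have htime : |z x (t + l * h ^ 2) - z x t - l * h ^ 2 * zt x t| ≤ η * (l * h ^ 2) := by
    have htaylor := abs_sub_sub_deriv_le (g := fun s ↦ z x s) (g' := zt x) (x := t)
      (h := l * h ^ 2) (η := η) (by
        rw [huIcc]
        exact fun s hs ↦ hzt x s ⟨ht0.trans hs.1, hs.2.trans htT⟩) (by rwa [huIcc])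
    rwa [abs_of_nonneg hτ] at htaylor
  have hspace := abs_second_difference_sub_le (fun y ↦ hzx y t ht) (fun y ↦ hzxx y t ht) hoscx
  have hsplit : (1 - 2 * l + l * h ^ 2 * c x t) * z x t + l * (z (x + h) t + z (x - h) t)
      - z x (t + l * h ^ 2) = l * (z (x + h) t + z (x - h) t - 2 * z x t - h ^ 2 * zxx x t)
        - (z x (t + l * h ^ 2) - z x t - l * h ^ 2 * zt x t) := by
    rw [heq]
    ring
  calc _ ≤ |l * (z (x + h) t + z (x - h) t - 2 * z x t - h ^ 2 * zxx x t)|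
        + |z x (t + l * h ^ 2) - z x t - l * h ^ 2 * zt x t| := hsplit ▸ abs_sub _ _
    _ ≤ l * (2 * η * h ^ 2) + η * (l * h ^ 2) := by
        rw [abs_mul, abs_of_nonneg hl0]
        gcongr
    _ = 3 * η * (l * h ^ 2) := by ring

lemma exists_abs_step_sub_le (hz : IsLinSol K M T z c) (x₀ R : ℝ) {η : ℝ} (hη : 0 < η) :
    ∃ h₀ > 0, ∀ h ∈ Ioo 0 h₀, ∀ l ∈ Icc (0 : ℝ) (1 / 4), ∀ (k : ℕ) (i : ℤ),
      (k + 1) * (l * h ^ 2) ≤ T → |h * i| ≤ R →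
      |z (x₀ + h * i) ((k + 1) * (l * h ^ 2)) - step l (gridCoeff c x₀ h (l * h ^ 2) k)
        (fun j ↦ z (x₀ + h * j) (k * (l * h ^ 2))) i| ≤ η * (l * h ^ 2) := by
  obtain ⟨zt, zx, zxx, hzt, hzx, hzxx, hct, hcxx, heq⟩ := hz.exists_deriv
  obtain ⟨δ₁, hδ₁, hmodt⟩ :=
    exists_uniform_modulus hct (x₀ - R - 1) (x₀ + R + 1) (show 0 < η / 3 by positivity)
  obtain ⟨δ₂, hδ₂, hmodx⟩ :=
    exists_uniform_modulus hcxx (x₀ - R - 1) (x₀ + R + 1) (show 0 < η / 3 by positivity)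
  refine ⟨min 1 (min δ₁ δ₂), by positivity, fun h ⟨hh, hh₀⟩ l hl k i hk hi ↦ ?_⟩
  obtain ⟨hh1, hhδ₁, hhδ₂⟩ : h < 1 ∧ h < δ₁ ∧ h < δ₂ := by simpa only [lt_min_iff] using hh₀
  have hl0 : 0 ≤ l := hl.1
  have hτh : l * h ^ 2 < h := by nlinarith [hl.2]
  have ht0 : 0 ≤ k * (l * h ^ 2) := by positivity
  have htT : k * (l * h ^ 2) + l * h ^ 2 ≤ T := by linarith
  have hball {y : ℝ} (hy : |y - (x₀ + h * i)| ≤ |h|) : y ∈ Icc (x₀ - R - 1) (x₀ + R + 1) := by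
    rw [abs_of_pos hh] at hy
    constructor <;> linarith [abs_le.1 hy, abs_le.1 hi]
  have hx := hball (y := x₀ + h * i) (by simp)
  have ht : (k * (l * h ^ 2) : ℝ) ∈ Icc 0 T :=
    ⟨ht0, (le_add_of_nonneg_right (by positivity)).trans htT⟩
  have herror := abs_step_sub_le_of_oscillation hl ht0 htT hzt hzx hzxx (heq (x₀ + h * i) _ ht)
    (fun s hs ↦ hmodt _ hx _ hx s ⟨ht0.trans hs.1, hs.2.trans htT⟩ _ ht (by simpa)
      (by rw [abs_of_nonneg] <;> linarith [hs.1, hs.2]))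
    (fun y hy ↦ hmodx y (hball hy) _ hx _ ht _ ht
      (hy.trans_lt (by rwa [abs_of_pos hh])) (by simpa))
  rw [mul_div_cancel₀ η three_ne_zero, abs_sub_comm] at herror
  convert herror using 2
  simp only [step_apply, gridCoeff]
  push_cast
  ring_nf

end IsLinSol

/-- A supersolution of the scheme: up to the growth factor `(1 + q) ^ k`, the function
`θ k + β (x² + 2 t)` at time step `k`. -/
def barrier (l h q θ β : ℝ) (k : ℕ) (i : ℤ) : ℝ :=
  (1 + q) ^ k * (k * θ + β * ((h * i) ^ 2 + 2 * k * (l * h ^ 2)))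

section Barrier

variable {l h q θ β : ℝ}

lemma barrier_nonneg (hl : 0 ≤ l) (hq : 0 ≤ q) (hθ : 0 ≤ θ) (hβ : 0 ≤ β) (k : ℕ) (i : ℤ) :
    0 ≤ barrier l h q θ β k i := by
  unfold barrier
  positivity

lemma sq_le_barrier (hl : 0 ≤ l) (hq : 0 ≤ q) (hθ : 0 ≤ θ) (hβ : 0 ≤ β) (k : ℕ) (i : ℤ) :
    β * (h * i) ^ 2 ≤ barrier l h q θ β k i := by
  have hrest : 0 ≤ k * θ + β * (2 * k * (l * h ^ 2)) := by positivity
  calc β * (h * i) ^ 2 ≤ k * θ + β * ((h * i) ^ 2 + 2 * k * (l * h ^ 2)) := by linarith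
    _ ≤ (1 + q) ^ k * (k * θ + β * ((h * i) ^ 2 + 2 * k * (l * h ^ 2))) :=
        le_mul_of_one_le_left (by positivity) (one_le_pow₀ (by linarith))

lemma step_barrier_add_le (hl : 0 ≤ l) (hq : 0 ≤ q) (hθ : 0 ≤ θ) (hβ : 0 ≤ β) {κ : ℤ → ℝ}
    {i : ℤ} (hκ : κ i ≤ q) (k : ℕ) :
    step l κ (barrier l h q θ β k) i + θ ≤ barrier l h q θ β (k + 1) i := by
  have hstep : step l κ (barrier l h q θ β k) i
      = (1 + κ i) * barrier l h q θ β k i + (1 + q) ^ k * (β * (2 * (l * h ^ 2))) := by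
    simp only [step_apply, barrier]
    push_cast
    ring
  have hnext : barrier l h q θ β (k + 1) i
      = (1 + q) * barrier l h q θ β k i + (1 + q) ^ (k + 1) * (β * (2 * (l * h ^ 2)))
        + (1 + q) ^ (k + 1) * θ := by
    simp only [barrier]
    push_cast
    ring
  have hκbarrier : (1 + κ i) * barrier l h q θ β k i ≤ (1 + q) * barrier l h q θ β k i :=
    mul_le_mul_of_nonneg_right (by linarith) (barrier_nonneg hl hq hθ hβ k i)
  have hpow : (1 + q) ^ k * (β * (2 * (l * h ^ 2)))
      ≤ (1 + q) ^ (k + 1) * (β * (2 * (l * h ^ 2))) := by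
    gcongr
    · linarith
    · lia
  have hθpow : θ ≤ (1 + q) ^ (k + 1) * θ :=
    le_mul_of_one_le_left hθ (one_le_pow₀ (by linarith))
  linarith

lemma abs_le_barrier (hl : l ∈ Icc (0 : ℝ) (1 / 4)) (hθ : 0 ≤ θ) (hβ : 0 ≤ β)
    {κ : ℕ → ℤ → ℝ} (hκ : 0 ≤ κ) (hκq : ∀ k i, κ k i ≤ q) {e : ℕ → ℤ → ℝ} {m : ℕ} {S : Set ℤ}
    (hzero : e 0 = 0)
    (hinside : ∀ k < m, ∀ i ∈ S, |e (k + 1) i - step l (κ k) (e k) i| ≤ θ)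
    (houtside : ∀ k ≤ m, ∀ i ∉ S, |e k i| ≤ β * (h * i) ^ 2) :
    ∀ k ≤ m, |e k| ≤ barrier l h q θ β k := by
  have hq : 0 ≤ q := (hκ 0 0).trans (hκq 0 0)
  intro k
  induction k with
  | zero =>
    intro _ i
    simpa [hzero] using barrier_nonneg hl.1 hq hθ hβ 0 i
  | succ k ih =>
    intro hk i
    by_cases hi : i ∈ S
    · calc |e (k + 1)| i
          = |step l (κ k) (e k) i + (e (k + 1) i - step l (κ k) (e k) i)| := by
            rw [Pi.abs_apply, add_sub_cancel]
        _ ≤ |step l (κ k) (e k) i| + |e (k + 1) i - step l (κ k) (e k) i| := abs_add_le _ _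
        _ ≤ step l (κ k) (barrier l h q θ β k) i + θ :=
            add_le_add (abs_step_le hl (hκ k) (ih (by lia)) i) (hinside k hk i hi)
        _ ≤ barrier l h q θ β (k + 1) i := step_barrier_add_le hl.1 hq hθ hβ (hκq k i) k
    · exact (houtside (k + 1) hk i hi).trans (sq_le_barrier hl.1 hq hθ hβ (k + 1) i)

end Barrier

namespace IsLinSol

variable {K M T : ℝ} {z c : ℝ → ℝ → ℝ}

lemma abs_evol_sub_le (hz : IsLinSol K M T z c) (hT : 0 ≤ T) {x₀ h l : ℝ}
    (hl : l ∈ Icc (0 : ℝ) (1 / 4)) {k : ℕ} (hk : k * (l * h ^ 2) ≤ T) (i : ℤ) :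
    |evol l (gridCoeff c x₀ h (l * h ^ 2)) k (fun j ↦ z (x₀ + h * j) 0) i
      - z (x₀ + h * i) (k * (l * h ^ 2))| ≤ exp (2 * K * T) * M + M := by
  have hτ : 0 ≤ l * h ^ 2 := mul_nonneg hl.1 (sq_nonneg h)
  have hK : 0 ≤ K := hz.coeff_bound_nonneg
  have hevol := abs_evol_le hl (gridCoeff_nonneg hz.coeff_nonneg x₀ h hτ)
    (gridCoeff_le hz.coeff_le x₀ h hτ)
    (v := fun j ↦ z (x₀ + h * j) 0) (w := fun _ ↦ M)
    (fun i ↦ hz.abs_le_bound _ 0 ⟨le_rfl, hT⟩) k i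
  rw [evol_heat_const, Pi.smul_apply, smul_eq_mul, ← mul_assoc 2 K] at hevol
  have hgrowth : (1 + 2 * K * (l * h ^ 2)) ^ k ≤ exp (2 * K * T) :=
    one_add_mul_pow_le_exp (by positivity) hτ hk
  exact (abs_sub _ _).trans (add_le_add
    (hevol.trans (mul_le_mul_of_nonneg_right hgrowth (hz.bound_nonneg hT)))
    (hz.abs_le_bound _ _ ⟨by positivity, hk⟩))

-- The error is controlled by consistency inside a large ball and by the global bound outside, and
-- the barrier absorbs both.
lemma exists_abs_evol_sub_le_barrier (hz : IsLinSol K M T z c) (hT : 0 ≤ T) (x₀ : ℝ) {ε : ℝ}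
    (hε : 0 < ε) : ∃ h₀ > 0, ∀ h ∈ Ioo 0 h₀, ∀ l ∈ Icc (0 : ℝ) (1 / 4), ∀ m : ℕ,
      m * (l * h ^ 2) ≤ T → ∀ i : ℤ,
      |evol l (gridCoeff c x₀ h (l * h ^ 2)) m (fun j ↦ z (x₀ + h * j) 0) i
        - z (x₀ + h * i) (m * (l * h ^ 2))|
      ≤ barrier l h (K * (l * h ^ 2)) (ε * (l * h ^ 2)) ε m i := by
  set B := exp (2 * K * T) * M + M
  obtain ⟨h₀, hh₀, hstep⟩ := hz.exists_abs_step_sub_le x₀ √(B / ε) hε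
  refine ⟨h₀, hh₀, fun h hh l hl m hm i ↦ ?_⟩
  have hτ : 0 ≤ l * h ^ 2 := mul_nonneg hl.1 (sq_nonneg h)
  have htime {k : ℕ} (hk : k ≤ m) : k * (l * h ^ 2) ≤ T :=
    (mul_le_mul_of_nonneg_right (Nat.cast_le.2 hk) hτ).trans hm
  refine abs_le_barrier (h := h) (S := {i | |h * i| ≤ √(B / ε)})
    (e := fun k i ↦ evol l (gridCoeff c x₀ h (l * h ^ 2)) k (fun j ↦ z (x₀ + h * j) 0) i
      - z (x₀ + h * i) (k * (l * h ^ 2)))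
    hl (by positivity) hε.le (gridCoeff_nonneg hz.coeff_nonneg x₀ h hτ)
    (gridCoeff_le hz.coeff_le x₀ h hτ)
    ?_ (fun k hk i hi ↦ ?_) (fun k hk i hi ↦ ?_) m le_rfl i
  · ext i
    simp [evol_zero]
  · convert hstep h hh l hl k i (mod_cast htime hk) hi using 1
    rw [abs_sub_comm]
    congr 1
    simp only [evol_succ, step_apply]
    push_cast
    ring
  · refine (hz.abs_evol_sub_le hT hl (htime hk) i).trans ?_
    have hfar : B / ε < (h * i) ^ 2 := by
      simpa only [sq_abs] using Real.lt_sq_of_sqrt_lt (not_le.1 hi)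
    rw [div_lt_iff₀' hε] at hfar
    exact hfar.le

lemma exists_abs_evol_sub_le (hz : IsLinSol K M T z c) (hT : 0 ≤ T) (x₀ ρ : ℝ) {η : ℝ}
    (hη : 0 < η) : ∃ h₀ > 0, ∀ h ∈ Ioo 0 h₀, ∀ l ∈ Icc (0 : ℝ) (1 / 4), ∀ m : ℕ,
      m * (l * h ^ 2) = T → ∀ i : ℤ, |h * i| ≤ ρ →
      |evol l (gridCoeff c x₀ h (l * h ^ 2)) m (fun j ↦ z (x₀ + h * j) 0) i
        - z (x₀ + h * i) T| ≤ η := by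
  set ε := η / (exp (K * T) * (1 + 3 * T + ρ ^ 2)) with hε
  obtain ⟨h₀, hh₀, hbarrier⟩ := hz.exists_abs_evol_sub_le_barrier hT x₀ (ε := ε) (by positivity)
  refine ⟨h₀, hh₀, fun h hh l hl m hm i hi ↦ ?_⟩
  have hτ : 0 ≤ l * h ^ 2 := mul_nonneg hl.1 (sq_nonneg h)
  have hi2 : (h * i) ^ 2 ≤ ρ ^ 2 := sq_le_sq' (abs_le.1 hi).1 (abs_le.1 hi).2
  have hgrowth := one_add_mul_pow_le_exp hz.coeff_bound_nonneg hτ hm.le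
  calc _ ≤ barrier l h (K * (l * h ^ 2)) (ε * (l * h ^ 2)) ε m i := by
        simpa only [hm] using hbarrier h hh l hl m hm.le i
    _ = (1 + K * (l * h ^ 2)) ^ m * (ε * (3 * T + (h * i) ^ 2)) := by
        rw [barrier, ← hm]
        ring
    _ ≤ exp (K * T) * (ε * (1 + 3 * T + ρ ^ 2)) := by
        gcongr
        linarith
    _ = η := by
        rw [hε]
        field_simp

end IsLinSol

/-! ### Approximations on grids through two given points -/

/-- The mesh width `ℓ / (n + 1)`, for which both `x₀` and `x₀ + ℓ` are grid points. -/
def mesh (ℓ : ℝ) (n : ℕ) : ℝ := ℓ / (n + 1)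

/-- A number of time steps for which the time step is at most a quarter of the squared mesh
width. -/
def numSteps (T ℓ : ℝ) (n : ℕ) : ℕ := ⌈4 * T / mesh ℓ n ^ 2⌉₊ + 1

/-- The ratio `τ / h²` of the time step `τ = T / numSteps` and the squared mesh width. -/
def meshRatio (T ℓ : ℝ) (n : ℕ) : ℝ := T / numSteps T ℓ n / mesh ℓ n ^ 2

/-- The `n`-th approximation at time `T` of the solution of `z_t = z_xx + c z`, as a function of the
initial datum. The index `0` stands for the point `x₀` and the index `n + 1` for `x₀ + ℓ`. -/
def approx (T ℓ x₀ : ℝ) (c : ℝ → ℝ → ℝ) (n : ℕ) : (ℝ → ℝ) →ₗ[ℝ] (ℤ → ℝ) :=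
  evol (meshRatio T ℓ n) (gridCoeff c x₀ (mesh ℓ n) (meshRatio T ℓ n * mesh ℓ n ^ 2))
    (numSteps T ℓ n) ∘ₗ LinearMap.funLeft ℝ ℝ fun i : ℤ ↦ x₀ + mesh ℓ n * i

section Approx

variable {K M T ℓ x₀ : ℝ} {c : ℝ → ℝ → ℝ} {v w : ℝ → ℝ}

lemma approx_apply (T ℓ x₀ : ℝ) (c : ℝ → ℝ → ℝ) (n : ℕ) (v : ℝ → ℝ) :
    approx T ℓ x₀ c n v
      = evol (meshRatio T ℓ n) (gridCoeff c x₀ (mesh ℓ n) (meshRatio T ℓ n * mesh ℓ n ^ 2))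
          (numSteps T ℓ n) fun i : ℤ ↦ v (x₀ + mesh ℓ n * i) := rfl

lemma approx_heat_apply (T ℓ x₀ : ℝ) (n : ℕ) (v : ℝ → ℝ) :
    approx T ℓ x₀ 0 n v
      = evol (meshRatio T ℓ n) 0 (numSteps T ℓ n) fun i : ℤ ↦ v (x₀ + mesh ℓ n * i) := by
  rw [approx_apply, gridCoeff_zero]

lemma mesh_pos (hℓ : 0 < ℓ) (n : ℕ) : 0 < mesh ℓ n := by
  unfold mesh
  positivity

lemma mesh_mul_succ (ℓ : ℝ) (n : ℕ) : mesh ℓ n * ((n + 1 : ℤ) : ℝ) = ℓ := by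
  rw [mesh]
  push_cast
  exact div_mul_cancel₀ ℓ (by positivity)

lemma tendsto_mesh (ℓ : ℝ) : Tendsto (mesh ℓ) atTop (𝓝 0) := by
  change Tendsto (fun n : ℕ ↦ ℓ / (n + 1)) atTop (𝓝 0)
  simpa only [mul_one_div, mul_zero] using
    (tendsto_one_div_add_atTop_nhds_zero_nat (𝕜 := ℝ)).const_mul ℓ

lemma numSteps_mul_timeStep (T : ℝ) (hℓ : 0 < ℓ) (n : ℕ) :
    numSteps T ℓ n * (meshRatio T ℓ n * mesh ℓ n ^ 2) = T := by
  have hmesh := mesh_pos hℓ n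
  have hsteps : (0 : ℝ) < numSteps T ℓ n := Nat.cast_pos.2 (Nat.succ_pos _)
  rw [meshRatio]
  field_simp

lemma meshRatio_mem_Icc (hT : 0 ≤ T) (hℓ : 0 < ℓ) (n : ℕ) :
    meshRatio T ℓ n ∈ Icc (0 : ℝ) (1 / 4) := by
  have hmesh := mesh_pos hℓ n
  have hsteps : 4 * T / mesh ℓ n ^ 2 < numSteps T ℓ n := by
    rw [numSteps]
    push_cast
    linarith [Nat.le_ceil (4 * T / mesh ℓ n ^ 2)]
  refine ⟨by unfold meshRatio; positivity, ?_⟩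
  rw [meshRatio, div_div, div_le_iff₀ (mul_pos (lt_of_le_of_lt (by positivity) hsteps)
    (by positivity))]
  rw [div_lt_iff₀ (by positivity)] at hsteps
  linarith

lemma timeStep_nonneg (hT : 0 ≤ T) (hℓ : 0 < ℓ) (n : ℕ) : 0 ≤ meshRatio T ℓ n * mesh ℓ n ^ 2 :=
  mul_nonneg (meshRatio_mem_Icc hT hℓ n).1 (sq_nonneg _)

lemma approx_heat_const (T ℓ x₀ r : ℝ) (n : ℕ) : approx T ℓ x₀ 0 n (fun _ ↦ r) = fun _ ↦ r := by
  rw [approx_heat_apply, evol_heat_const]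

lemma approx_heat_sq (T x₀ y : ℝ) (hℓ : 0 < ℓ) (n : ℕ) :
    approx T ℓ x₀ 0 n (fun x ↦ (x - y) ^ 2)
      = fun i : ℤ ↦ (x₀ + mesh ℓ n * i - y) ^ 2 + 2 * T := by
  have hshift : (fun i : ℤ ↦ (x₀ + mesh ℓ n * i - y) ^ 2)
      = fun i : ℤ ↦ (x₀ - y + mesh ℓ n * i) ^ 2 := by
    ext i
    ring
  rw [approx_heat_apply, hshift, evol_heat_sq]
  ext i
  rw [mul_assoc 2, numSteps_mul_timeStep T hℓ n]
  ring

lemma approx_nonneg (hT : 0 ≤ T) (hℓ : 0 < ℓ) (hc : 0 ≤ c) (hv : 0 ≤ v) (n : ℕ) :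
    0 ≤ approx T ℓ x₀ c n v := by
  rw [approx_apply]
  exact evol_nonneg (meshRatio_mem_Icc hT hℓ n)
    (gridCoeff_nonneg hc _ _ (timeStep_nonneg hT hℓ n)) (fun _ ↦ hv _) _

lemma approx_heat_le_approx (hT : 0 ≤ T) (hℓ : 0 < ℓ) (hc : 0 ≤ c) (hv : 0 ≤ v) (hwv : w ≤ v)
    (n : ℕ) : approx T ℓ x₀ 0 n w ≤ approx T ℓ x₀ c n v := by
  rw [approx_heat_apply]
  exact evol_heat_le_evol (meshRatio_mem_Icc hT hℓ n)
    (gridCoeff_nonneg hc _ _ (timeStep_nonneg hT hℓ n)) (fun _ ↦ hv _) (fun _ ↦ hwv _) _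

lemma abs_approx_le (hT : 0 ≤ T) (hℓ : 0 < ℓ) (hc : 0 ≤ c) (hcK : ∀ x t, c x t ≤ K)
    (hvw : |v| ≤ w) (n : ℕ) :
    |approx T ℓ x₀ c n v| ≤ exp (2 * K * T) • approx T ℓ x₀ 0 n w := by
  have hK : 0 ≤ K := (hc 0 0).trans (hcK 0 0)
  have hτ := timeStep_nonneg hT hℓ n
  have hgrowth : (1 + 2 * K * (meshRatio T ℓ n * mesh ℓ n ^ 2)) ^ numSteps T ℓ n
      ≤ exp (2 * K * T) :=
    one_add_mul_pow_le_exp (by positivity) hτ (numSteps_mul_timeStep T hℓ n).le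
  have hevol := abs_evol_le (v := fun i : ℤ ↦ v (x₀ + mesh ℓ n * i))
    (w := fun i : ℤ ↦ w (x₀ + mesh ℓ n * i)) (meshRatio_mem_Icc hT hℓ n)
    (gridCoeff_nonneg hc x₀ (mesh ℓ n) hτ) (gridCoeff_le hcK x₀ (mesh ℓ n) hτ)
    (fun _ ↦ hvw _) (numSteps T ℓ n)
  rw [← mul_assoc 2, ← approx_heat_apply] at hevol
  exact hevol.trans (smul_le_smul_of_nonneg_right hgrowth
    (approx_nonneg hT hℓ le_rfl ((abs_nonneg v).trans hvw) n))

lemma abs_approx_le_const (hT : 0 ≤ T) (hℓ : 0 < ℓ) (hc : 0 ≤ c) (hcK : ∀ x t, c x t ≤ K)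
    (hv : ∀ x, |v x| ≤ M) (n : ℕ) (i : ℤ) :
    |approx T ℓ x₀ c n v i| ≤ exp (2 * K * T) * M := by
  simpa only [approx_heat_const, Pi.abs_apply, Pi.smul_apply, smul_eq_mul] using
    abs_approx_le (x₀ := x₀) (w := fun _ ↦ M) hT hℓ hc hcK (fun x ↦ hv x) n i

lemma strictMono_gridPoint (x₀ : ℝ) (hℓ : 0 < ℓ) (n : ℕ) :
    StrictMono fun i : ℤ ↦ x₀ + mesh ℓ n * i := by
  have hmesh := mesh_pos hℓ n
  intro i j hij
  dsimp only
  gcongr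

lemma IsAltNonneg.wedge_approx (hT : 0 ≤ T) (hℓ : 0 < ℓ) (hc : 0 ≤ c)
    (hvw : IsAltNonneg (wedge v w)) (n : ℕ) :
    IsAltNonneg (wedge (approx T ℓ x₀ c n v) (approx T ℓ x₀ c n w)) := by
  rw [approx_apply, approx_apply, wedge_evol]
  exact (hvw.comp_strictMono (strictMono_gridPoint x₀ hℓ n)).evol₂ (meshRatio_mem_Icc hT hℓ n)
    (gridCoeff_nonneg hc _ _ (timeStep_nonneg hT hℓ n)) _

lemma IsAltNonneg.wedge_approx_sub_heat (hT : 0 ≤ T) (hℓ : 0 < ℓ) (hc : 0 ≤ c)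
    (hvw : IsAltNonneg (wedge v w)) {v₁ w₁ v₂ w₂ : ℝ → ℝ} {r₁ r₂ : ℝ}
    (hsub : IsAltNonneg (wedge v w - (r₁ • wedge v₁ w₁ - r₂ • wedge v₂ w₂))) (n : ℕ) :
    IsAltNonneg (wedge (approx T ℓ x₀ c n v) (approx T ℓ x₀ c n w)
      - (r₁ • wedge (approx T ℓ x₀ 0 n v₁) (approx T ℓ x₀ 0 n w₁)
        - r₂ • wedge (approx T ℓ x₀ 0 n v₂) (approx T ℓ x₀ 0 n w₂))) := by
  have hgrid := strictMono_gridPoint x₀ hℓ n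
  simp only [approx_heat_apply, approx_apply T ℓ x₀ c, wedge_evol, ← map_smul, ← map_sub]
  exact (hvw.comp_strictMono hgrid).evol₂_sub_heat (meshRatio_mem_Icc hT hℓ n)
    (gridCoeff_nonneg hc _ _ (timeStep_nonneg hT hℓ n)) (hsub.comp_strictMono hgrid) _

end Approx

namespace IsLinSol

variable {K M T ℓ : ℝ} {z c : ℝ → ℝ → ℝ}

lemma tendsto_approx (hz : IsLinSol K M T z c) (hT : 0 ≤ T) (hℓ : 0 < ℓ) (x₀ : ℝ) {y : ℝ}
    {i : ℕ → ℤ} (hi : ∀ n, mesh ℓ n * i n = y) :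
    Tendsto (fun n ↦ approx T ℓ x₀ c n (fun x ↦ z x 0) (i n)) atTop (𝓝 (z (x₀ + y) T)) := by
  rw [Metric.tendsto_nhds]
  intro ε hε
  obtain ⟨h₀, hh₀, hconv⟩ := hz.exists_abs_evol_sub_le hT x₀ |y| (half_pos hε)
  filter_upwards [(tendsto_mesh ℓ).eventually (gt_mem_nhds hh₀)] with n hn
  have hbound := hconv (mesh ℓ n) ⟨mesh_pos hℓ n, hn⟩ _ (meshRatio_mem_Icc hT hℓ n) _
    (numSteps_mul_timeStep T hℓ n) (i n) (by rw [hi])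
  rw [hi] at hbound
  exact hbound.trans_lt (half_lt_self hε)

lemma tendsto_approx_left (hz : IsLinSol K M T z c) (hT : 0 ≤ T) (hℓ : 0 < ℓ) (x₀ : ℝ) :
    Tendsto (fun n ↦ approx T ℓ x₀ c n (fun x ↦ z x 0) 0) atTop (𝓝 (z x₀ T)) := by
  simpa only [add_zero] using
    hz.tendsto_approx hT hℓ x₀ (y := 0) (i := fun _ ↦ 0) fun n ↦ by simp

lemma tendsto_approx_right (hz : IsLinSol K M T z c) (hT : 0 ≤ T) (hℓ : 0 < ℓ) (x₀ : ℝ) :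
    Tendsto (fun n : ℕ ↦ approx T ℓ x₀ c n (fun x ↦ z x 0) (n + 1)) atTop
      (𝓝 (z (x₀ + ℓ) T)) :=
  hz.tendsto_approx hT hℓ x₀ fun n ↦ mesh_mul_succ ℓ n

end IsLinSol

/-! ### Gaussian barriers -/

/-- The heat kernel `(σ + t) ^ (-1/2) * exp (-(x - p)² / (4 (σ + t)))`, without the factor
`(4π) ^ (-1/2)`, started at time `σ`. Writing the power inside the exponential turns comparisons
into inequalities between exponents. -/
def gauss (σ p x t : ℝ) : ℝ := exp (-(x - p) ^ 2 / (4 * (σ + t)) - log (σ + t) / 2)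

section Gauss

variable {σ t T : ℝ}

lemma gauss_pos (σ p x t : ℝ) : 0 < gauss σ p x t := exp_pos _

lemma gauss_le {r : ℝ} (hr : 0 < r) (hrσt : r ≤ σ + t) (p x : ℝ) :
    gauss σ p x t ≤ exp (-log r / 2) := by
  have hsq : 0 ≤ (x - p) ^ 2 / (4 * (σ + t)) := by
    have := hr.trans_le hrσt
    positivity
  have hlog := log_le_log hr hrσt
  rw [gauss, exp_le_exp, neg_div]
  linarith

lemma hasDerivAt_gauss (σ p x t : ℝ) :
    HasDerivAt (fun y ↦ gauss σ p y t) (-(x - p) / (2 * (σ + t)) * gauss σ p x t) x := by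
  have hexponent : HasDerivAt (fun y ↦ -(y - p) ^ 2 / (4 * (σ + t)) - log (σ + t) / 2)
      (-(2 * (x - p) ^ (2 - 1) * 1) / (4 * (σ + t))) x :=
    ((((hasDerivAt_id x).sub_const p).pow 2).neg.div_const _).sub_const _
  refine hexponent.exp.congr_deriv ?_
  rw [← gauss, show 4 * (σ + t) = 2 * (2 * (σ + t)) by ring, ← div_div]
  ring

lemma hasDerivAt_deriv_gauss (hσt : 0 < σ + t) (p x : ℝ) :
    HasDerivAt (fun y ↦ -(y - p) / (2 * (σ + t)) * gauss σ p y t)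
      (gauss σ p x t * ((x - p) ^ 2 / (4 * (σ + t) ^ 2) - 1 / (2 * (σ + t)))) x := by
  have hslope : HasDerivAt (fun y ↦ -(y - p) / (2 * (σ + t))) (-1 / (2 * (σ + t))) x :=
    ((hasDerivAt_id x).sub_const p).neg.div_const _
  refine (hslope.mul (hasDerivAt_gauss σ p x t)).congr_deriv ?_
  field_simp
  ring

lemma hasDerivAt_gauss_time (hσt : 0 < σ + t) (p x : ℝ) :
    HasDerivAt (fun s ↦ gauss σ p x s)
      (gauss σ p x t * ((x - p) ^ 2 / (4 * (σ + t) ^ 2) - 1 / (2 * (σ + t)))) t := by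
  have hshift : HasDerivAt (fun s ↦ σ + s) 1 t := (hasDerivAt_id t).const_add σ
  have hexponent : HasDerivAt (fun s ↦ -(x - p) ^ 2 / (4 * (σ + s)) - log (σ + s) / 2)
      ((0 * (4 * (σ + t)) - -(x - p) ^ 2 * (4 * 1)) / (4 * (σ + t)) ^ 2 - 1 / (σ + t) / 2) t :=
    ((hasDerivAt_const t _).div (hshift.const_mul 4) (by positivity)).sub
      ((hshift.log hσt.ne').div_const 2)
  refine hexponent.exp.congr_deriv ?_
  rw [← gauss]
  congr 1
  field_simp
  ring

lemma continuousOn_deriv_gauss_time (hσ : 0 < σ) (p T : ℝ) :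
    ContinuousOn (fun q : ℝ × ℝ ↦ gauss σ p q.1 q.2 *
      ((q.1 - p) ^ 2 / (4 * (σ + q.2) ^ 2) - 1 / (2 * (σ + q.2)))) (univ ×ˢ Icc 0 T) := by
  have hne : ∀ q ∈ univ ×ˢ Icc 0 T, σ + (q : ℝ × ℝ).2 ≠ 0 := fun q hq ↦
    (add_pos_of_pos_of_nonneg hσ hq.2.1).ne'
  unfold gauss
  fun_prop (disch := simp_all)

lemma isLinSol_gauss (hσ : 0 < σ) (p T : ℝ) :
    IsLinSol 0 (exp (-log σ / 2)) T (gauss σ p) 0 where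
  abs_le_bound x t ht := (abs_of_pos (gauss_pos σ p x t)).trans_le
    (gauss_le hσ (le_add_of_nonneg_right ht.1) p x)
  coeff_nonneg _ _ := le_rfl
  coeff_le _ _ := le_rfl
  exists_deriv :=
    ⟨_, _, _, fun x _ ht ↦ hasDerivAt_gauss_time (add_pos_of_pos_of_nonneg hσ ht.1) p x,
      fun x t _ ↦ hasDerivAt_gauss σ p x t,
      fun x _ ht ↦ hasDerivAt_deriv_gauss (add_pos_of_pos_of_nonneg hσ ht.1) p x,
      continuousOn_deriv_gauss_time hσ p T, continuousOn_deriv_gauss_time hσ p T,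
      fun x t _ ↦ by simp⟩

lemma gauss_mul_gauss (σ p q x y t : ℝ) : gauss σ p x t * gauss σ q y t
    = exp (-((x - p) ^ 2 + (y - q) ^ 2) / (4 * (σ + t)) - log (σ + t)) := by
  rw [gauss, gauss, ← exp_add]
  congr 1
  ring

/-- The two-point determinant at time `t` of the Gaussians centred at `p` and `q`. -/
def gaussWedge (σ p q t : ℝ) : ℝ → ℝ → ℝ :=
  wedge (fun x ↦ gauss σ p x t) fun x ↦ gauss σ q x t

lemma gaussWedge_le (hσ : 0 < σ) (ht : 0 ≤ t) (p q x y : ℝ) :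
    gaussWedge σ p q t x y ≤ exp (-log σ / 2) * exp (-log σ / 2) := by
  have hprod := mul_le_mul (gauss_le hσ (le_add_of_nonneg_right ht) p x)
    (gauss_le hσ (le_add_of_nonneg_right ht) q y) (gauss_pos ..).le (exp_pos _).le
  have hpos := mul_pos (gauss_pos σ p y t) (gauss_pos σ q x t)
  unfold gaussWedge wedge
  linarith

lemma gaussWedge_inv_natCast {N : ℕ} (hN : 1 ≤ N) (p q x y : ℝ) :
    gaussWedge (N : ℝ)⁻¹ p q 0 x y = exp (-((x - p) ^ 2 + (y - q) ^ 2) * N / 4 + log N) *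
      (1 - exp (-((y - x) * (q - p)) / 2) ^ N) := by
  have : (0 : ℝ) < N := Nat.cast_pos.2 hN
  rw [gaussWedge, wedge, gauss_mul_gauss, gauss_mul_gauss, ← exp_nat_mul, mul_sub, mul_one,
    ← exp_add, add_zero, log_inv]
  congr 2 <;> field_simp <;> ring

lemma gaussWedge_one (p q x y : ℝ) :
    gaussWedge 1 p q 0 x y = exp (-((x - p) ^ 2 + (y - q) ^ 2) / 4) *
      (1 - exp (-((y - x) * (q - p)) / 2)) := by
  simpa using gaussWedge_inv_natCast le_rfl p q x y

lemma exp_neg_mul_sub_le_one {p q x y : ℝ} (hpq : p ≤ q) (hxy : x ≤ y) :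
    exp (-((y - x) * (q - p)) / 2) ≤ 1 :=
  exp_le_one_iff.2 (by nlinarith)

lemma gaussWedge_one_nonneg {p q x y : ℝ} (hpq : p ≤ q) (hxy : x ≤ y) :
    0 ≤ gaussWedge 1 p q 0 x y := by
  rw [gaussWedge_one]
  exact mul_nonneg (exp_pos _).le (sub_nonneg.2 (exp_neg_mul_sub_le_one hpq hxy))

-- By Bernoulli the narrow wedge loses at most a factor `N` near the diagonal `x = y`, where both
-- wedges vanish to first order.
lemma exp_mul_gaussWedge_le {N : ℕ} (hN : 1 ≤ N) {p q x y ρ : ℝ} (hpq : p ≤ q) (hxy : x ≤ y)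
    (hρ : ρ ^ 2 ≤ (x - p) ^ 2 + (y - q) ^ 2) :
    exp (ρ ^ 2 / 4 * N - ρ ^ 2 / 4 - 2 * log N) * gaussWedge (N : ℝ)⁻¹ p q 0 x y
      ≤ gaussWedge 1 p q 0 x y := by
  have hN1 : (1 : ℝ) ≤ N := Nat.one_le_cast.2 hN
  rw [gaussWedge_one, gaussWedge_inv_natCast hN]
  set Y := exp (-((y - x) * (q - p)) / 2)
  set D := (x - p) ^ 2 + (y - q) ^ 2
  have hY : 0 ≤ 1 - Y := sub_nonneg.2 (exp_neg_mul_sub_le_one hpq hxy)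
  have hbernoulli : 1 - Y ^ N ≤ N * (1 - Y) := by
    have hY0 : 0 < Y := exp_pos _
    have hpow := one_add_mul_le_pow (a := Y - 1) (by linarith) N
    rw [add_sub_cancel] at hpow
    linarith
  calc _ ≤ exp (ρ ^ 2 / 4 * N - ρ ^ 2 / 4 - 2 * log N) *
        (exp (-D * N / 4 + log N) * (N * (1 - Y))) := by gcongr
    _ = exp (ρ ^ 2 / 4 * N - ρ ^ 2 / 4 - 2 * log N + (-D * N / 4 + log N) + log N) * (1 - Y) := by
        simp only [exp_add, exp_log (show (0 : ℝ) < N by linarith)]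
        ring
    _ ≤ exp (-D / 4) * (1 - Y) := by
        refine mul_le_mul_of_nonneg_right (exp_le_exp.2 ?_) hY
        nlinarith

lemma hasDerivAt_gaussWedge_diag (σ p q t x₁ : ℝ) :
    HasDerivAt (fun x ↦ gaussWedge σ p q t x x₁)
      (-((q - p) / (2 * (σ + t)) * (gauss σ p x₁ t * gauss σ q x₁ t))) x₁ := by
  refine (((hasDerivAt_gauss σ p x₁ t).mul_const _).sub
    ((hasDerivAt_gauss σ q x₁ t).const_mul _)).congr_deriv ?_
  ring

lemma exists_nat_lt_mul_sub_log {a : ℝ} (ha : 0 < a) (C : ℝ) :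
    ∃ N : ℕ, 1 ≤ N ∧ C < a * N - 2 * log N := by
  have hlog := isLittleO_log_id_atTop.comp_tendsto tendsto_natCast_atTop_atTop
  have hlarge := (tendsto_natCast_atTop_atTop (R := ℝ)).eventually_gt_atTop (2 * C / a)
  obtain ⟨N, hN, hlogN, hlargeN⟩ :=
    ((eventually_ge_atTop 1).and ((hlog.def (show 0 < a / 4 by positivity)).and hlarge)).exists
  refine ⟨N, hN, ?_⟩
  rw [div_lt_iff₀ ha] at hlargeN
  simp only [Function.comp_apply, id, norm_eq_abs, Nat.abs_cast] at hlogN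
  linarith [le_abs_self (log (N : ℝ))]

lemma gauss_exponent_lt (hσ : 0 < σ) (hσ1 : σ ≤ 1) (hT : 0 < T) {D α r : ℝ} (hD : 0 ≤ D)
    (hr : 0 ≤ r) (hα : D / (4 * T) < α) :
    -D / (4 * (1 + T)) - r * log (1 + T) < α + (-D / (4 * (σ + T)) - r * log (σ + T)) := by
  have hlog : r * log (σ + T) ≤ r * log (1 + T) := by gcongr
  have hnarrow : D / (4 * (σ + T)) ≤ D / (4 * T) := by
    gcongr
    linarith
  have hwide : 0 ≤ D / (4 * (1 + T)) := by positivity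
  rw [neg_div, neg_div]
  linarith

-- For `σ = 1 / N` with `N` large, the factor `A` makes the narrow Gaussian win at `(x₁, T)`
-- although it loses at time `0` away from `p`.
lemma exists_narrow_gauss_barrier {ρ : ℝ} (hρ : 0 < ρ) (hT : 0 < T) (p x₁ : ℝ) :
    ∃ A > 0, ∃ σ > 0, (∀ x, ρ ≤ |x - p| → A * gauss σ p x 0 ≤ gauss 1 p x 0) ∧
      gauss 1 p x₁ T < A * gauss σ p x₁ T := by
  obtain ⟨N, hN, hscale⟩ := exists_nat_lt_mul_sub_log (show 0 < ρ ^ 2 / 4 by positivity)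
    (ρ ^ 2 / 4 + (x₁ - p) ^ 2 / (4 * T))
  have hN1 : (1 : ℝ) ≤ N := Nat.one_le_cast.2 hN
  refine ⟨exp (ρ ^ 2 / 4 * N - ρ ^ 2 / 4 - 2 * log N), exp_pos _, (N : ℝ)⁻¹, by positivity,
    fun x hx ↦ ?_, ?_⟩
  · have hsq : ρ ^ 2 ≤ (x - p) ^ 2 := by
      simpa only [sq_abs] using pow_le_pow_left₀ hρ.le hx 2
    have hlog : 0 ≤ log N := log_nonneg hN1
    have hdiv : -(x - p) ^ 2 / (4 * (N : ℝ)⁻¹) = -(x - p) ^ 2 * N / 4 := by field_simp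
    rw [gauss, gauss, ← exp_add, exp_le_exp, add_zero, add_zero, log_one, log_inv, hdiv]
    nlinarith
  · have hexponent := gauss_exponent_lt (r := 1 / 2) (inv_pos.2 (by linarith))
      (inv_le_one_of_one_le₀ hN1) hT (sq_nonneg (x₁ - p)) (by norm_num)
      (show _ < ρ ^ 2 / 4 * N - ρ ^ 2 / 4 - 2 * log N by linarith)
    rw [gauss, gauss, ← exp_add, exp_lt_exp]
    linarith

lemma exists_narrow_gaussWedge_barrier {p q ρ : ℝ} (hpq : p < q) (hρ : 0 < ρ) (hT : 0 < T)
    (x₁ : ℝ) : ∃ A > 0, ∃ σ > 0,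
      (∀ x y, x < y → ρ ^ 2 ≤ (x - p) ^ 2 + (y - q) ^ 2 →
        A * gaussWedge σ p q 0 x y ≤ gaussWedge 1 p q 0 x y) ∧
      ∃ d < 0, HasDerivAt (fun x ↦ A * gaussWedge σ p q T x x₁ - gaussWedge 1 p q T x x₁) d x₁ := by
  obtain ⟨N, hN, hscale⟩ := exists_nat_lt_mul_sub_log (show 0 < ρ ^ 2 / 4 by positivity)
    (ρ ^ 2 / 4 + ((x₁ - p) ^ 2 + (x₁ - q) ^ 2) / (4 * T))
  have hN1 : (1 : ℝ) ≤ N := Nat.one_le_cast.2 hN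
  have hσ1 : (N : ℝ)⁻¹ ≤ 1 := inv_le_one_of_one_le₀ hN1
  have hexponent := gauss_exponent_lt (r := 1) (inv_pos.2 (by linarith)) hσ1 hT
    (add_nonneg (sq_nonneg (x₁ - p)) (sq_nonneg (x₁ - q))) zero_le_one
    (show _ < ρ ^ 2 / 4 * N - ρ ^ 2 / 4 - 2 * log N by linarith)
  rw [one_mul, one_mul, ← exp_lt_exp, exp_add, ← gauss_mul_gauss, ← gauss_mul_gauss] at hexponent
  have hslope : (q - p) / (2 * (1 + T)) ≤ (q - p) / (2 * ((N : ℝ)⁻¹ + T)) := by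
    have := sub_pos.2 hpq
    gcongr
  have hslope0 : 0 < (q - p) / (2 * (1 + T)) := div_pos (sub_pos.2 hpq) (by positivity)
  have hwide : 0 < gauss 1 p x₁ T * gauss 1 q x₁ T := mul_pos (gauss_pos ..) (gauss_pos ..)
  refine ⟨exp (ρ ^ 2 / 4 * N - ρ ^ 2 / 4 - 2 * log N), exp_pos _, (N : ℝ)⁻¹, by positivity,
    fun x y hxy hD ↦ exp_mul_gaussWedge_le hN hpq.le hxy.le hD, _, ?_,
    ((hasDerivAt_gaussWedge_diag (N : ℝ)⁻¹ p q T x₁).const_mul _).sub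
      (hasDerivAt_gaussWedge_diag 1 p q T x₁)⟩
  nlinarith

end Gauss

/-! ### The strong maximum principle -/

lemma exists_pos_mul_le {X : Type*} {b g : X → ℝ} {S : Set X} {B δ : ℝ} (hb : ∀ x, b x ≤ B)
    (hbS : ∀ x ∉ S, b x ≤ 0) (hg : 0 ≤ g) (hδ : 0 < δ) (hgS : ∀ x ∈ S, δ ≤ g x) :
    ∃ r > 0, ∀ x, r * b x ≤ g x := by
  have hB : 0 < max B 1 := lt_max_of_lt_right one_pos
  refine ⟨δ / max B 1, div_pos hδ hB, fun x ↦ ?_⟩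
  by_cases hx : x ∈ S
  · calc δ / max B 1 * b x ≤ δ / max B 1 * max B 1 := by
          gcongr
          exact (hb x).trans (le_max_left _ _)
      _ = δ := div_mul_cancel₀ δ hB.ne'
      _ ≤ g x := hgS x hx
  · exact (mul_nonpos_of_nonneg_of_nonpos (div_pos hδ hB).le (hbS x hx)).trans (hg x)

namespace IsLinSol

variable {K M M' T : ℝ} {z v c : ℝ → ℝ → ℝ}

lemma const_mul (hz : IsLinSol K M T z c) (r : ℝ) :
    IsLinSol K (|r| * M) T (fun x t ↦ r * z x t) c := by
  obtain ⟨zt, zx, zxx, hzt, hzx, hzxx, hcont_zt, hcont_zxx, heq⟩ := hz.exists_deriv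
  refine ⟨fun x t ht ↦ ?_, hz.coeff_nonneg, hz.coeff_le, fun x t ↦ r * zt x t,
    fun x t ↦ r * zx x t, fun x t ↦ r * zxx x t, fun x t ht ↦ (hzt x t ht).const_mul r,
    fun x t ht ↦ (hzx x t ht).const_mul r, fun x t ht ↦ (hzxx x t ht).const_mul r,
    continuousOn_const.mul hcont_zt, continuousOn_const.mul hcont_zxx, fun x t ht ↦ ?_⟩
  · rw [abs_mul]
    exact mul_le_mul_of_nonneg_left (hz.abs_le_bound x t ht) (abs_nonneg r)
  · dsimp only
    rw [heq x t ht]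
    ring

lemma sub (hz : IsLinSol K M T z c) (hv : IsLinSol K M' T v c) :
    IsLinSol K (M + M') T (fun x t ↦ z x t - v x t) c := by
  obtain ⟨zt, zx, zxx, hzt, hzx, hzxx, hcont_zt, hcont_zxx, heq_z⟩ := hz.exists_deriv
  obtain ⟨vt, vx, vxx, hvt, hvx, hvxx, hcont_vt, hcont_vxx, heq_v⟩ := hv.exists_deriv
  refine ⟨fun x t ht ↦ ?_, hz.coeff_nonneg, hz.coeff_le, fun x t ↦ zt x t - vt x t,
    fun x t ↦ zx x t - vx x t, fun x t ↦ zxx x t - vxx x t,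
    fun x t ht ↦ (hzt x t ht).sub (hvt x t ht), fun x t ht ↦ (hzx x t ht).sub (hvx x t ht),
    fun x t ht ↦ (hzxx x t ht).sub (hvxx x t ht), hcont_zt.sub hcont_vt,
    hcont_zxx.sub hcont_vxx, fun x t ht ↦ ?_⟩
  · exact (abs_sub _ _).trans (add_le_add (hz.abs_le_bound x t ht) (hv.abs_le_bound x t ht))
  · dsimp only
    rw [heq_z x t ht, heq_v x t ht]
    ring

lemma continuous_slice (hz : IsLinSol K M T z c) {t : ℝ} (ht : t ∈ Icc 0 T) :
    Continuous fun x ↦ z x t := by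
  obtain ⟨_, _, _, _, hzx, _⟩ := hz.exists_deriv
  exact continuous_iff_continuousAt.2 fun x ↦ (hzx x t ht).continuousAt

lemma eq_zero_of_datum_eq_zero (hz : IsLinSol K M T z c) (hT : 0 ≤ T) (hz0 : ∀ x, z x 0 = 0)
    (x : ℝ) : z x T = 0 := by
  have hdatum : (fun x ↦ z x 0) = 0 := funext hz0
  refine tendsto_nhds_unique (hz.tendsto_approx_left hT one_pos x) ?_
  simp only [hdatum, map_zero, Pi.zero_apply]
  exact tendsto_const_nhds

lemma heat_le (hz : IsLinSol K M T z c) (hv : IsLinSol 0 M' T v 0) (hT : 0 ≤ T)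
    (hz0 : ∀ x, 0 ≤ z x 0) (hvz : ∀ x, v x 0 ≤ z x 0) (x : ℝ) : v x T ≤ z x T :=
  le_of_tendsto_of_tendsto' (hv.tendsto_approx_left hT one_pos x)
    (hz.tendsto_approx_left hT one_pos x)
    fun n ↦ approx_heat_le_approx hT one_pos hz.coeff_nonneg hz0 hvz n 0

lemma pos_of_datum_nonneg (hz : IsLinSol K M T z c) (hT : 0 < T) (hz0 : ∀ x, 0 ≤ z x 0) {p : ℝ}
    (hp : 0 < z p 0) (x₁ : ℝ) : 0 < z x₁ T := by
  obtain ⟨ρ, hρ, hnear⟩ := Metric.eventually_nhds_iff.1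
    ((hz.continuous_slice ⟨le_rfl, hT.le⟩).continuousAt.eventually_const_lt (half_lt_self hp))
  obtain ⟨A, hA, σ, hσ, hfar, hwin⟩ := exists_narrow_gauss_barrier hρ hT p x₁
  obtain ⟨r, hr, hbarrier⟩ : ∃ r > 0, ∀ x, r * (A * gauss σ p x 0 - gauss 1 p x 0) ≤ z x 0 := by
    refine exists_pos_mul_le (S := Metric.ball p ρ) (B := A * exp (-log σ / 2)) (fun x ↦ ?_)
      (fun x hx ↦ ?_) hz0 (half_pos hp) fun x hx ↦ (hnear hx).le
    · have hnarrow := mul_le_mul_of_nonneg_left (gauss_le hσ (add_zero σ).ge p x) hA.le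
      linarith [gauss_pos 1 p x 0]
    · exact sub_nonpos.2 (hfar x (not_lt.1 hx))
  have hheat := (((isLinSol_gauss hσ p T).const_mul A).sub
    (isLinSol_gauss one_pos p T)).const_mul r
  exact (mul_pos hr (sub_pos.2 hwin)).trans_le (hz.heat_le hheat hT.le hz0 hbarrier x₁)

end IsLinSol

/-! ### The slope at a zero -/

lemma wedge_self_sub_le {X : Type*} {P Z : X → ℝ} {M : ℝ} (hP : ∀ x, 0 ≤ P x)
    (hPM : ∀ x, P x ≤ M) (x y : X) :
    wedge P (P - Z) x y ≤ M * (max (Z x) 0 + |Z y|) :=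
  calc wedge P (P - Z) x y = P y * Z x + P x * -Z y := by
        simp only [wedge, Pi.sub_apply]
        ring
    _ ≤ P y * max (Z x) 0 + P x * |Z y| := add_le_add
        (mul_le_mul_of_nonneg_left (le_max_left _ _) (hP y))
        (mul_le_mul_of_nonneg_left (neg_le_abs _) (hP x))
    _ ≤ M * max (Z x) 0 + M * |Z y| := add_le_add
        (mul_le_mul_of_nonneg_right (hPM y) (le_max_right _ _))
        (mul_le_mul_of_nonneg_right (hPM x) (abs_nonneg _))
    _ = M * (max (Z x) 0 + |Z y|) := (mul_add ..).symm

lemma wedge_posPart_negPart {X : Type*} {g : X → ℝ} {x y : X} (hx : 0 ≤ g x) (hy : g y ≤ 0) :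
    wedge g⁺ g⁻ x y = g x * -g y := by
  simp only [wedge, Pi.posPart_apply, Pi.negPart_apply, posPart_of_nonneg hx,
    posPart_eq_zero.2 hy, negPart_of_nonpos hy, zero_mul, sub_zero]

lemma exists_le_wedge_posPart_negPart {g : ℝ → ℝ} (hg : Continuous g) {p q : ℝ} (hp : 0 < g p)
    (hq : g q < 0) : ∃ ρ > 0, ∃ δ > 0, ∀ x y, (x - p) ^ 2 + (y - q) ^ 2 < ρ ^ 2 →
      δ ≤ wedge g⁺ g⁻ x y := by
  obtain ⟨ρ₁, hρ₁, hpos⟩ := Metric.eventually_nhds_iff.1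
    (hg.continuousAt.eventually_const_lt (half_lt_self hp))
  obtain ⟨ρ₂, hρ₂, hneg⟩ := Metric.eventually_nhds_iff.1
    (hg.continuousAt.eventually_lt_const (show g q < g q / 2 by linarith))
  have hρ : 0 < min ρ₁ ρ₂ := lt_min hρ₁ hρ₂
  refine ⟨min ρ₁ ρ₂, hρ, g p / 2 * -(g q / 2), by nlinarith, fun x y hxy ↦ ?_⟩
  have hxp : dist x p < min ρ₁ ρ₂ := abs_lt_of_sq_lt_sq (by nlinarith [sq_nonneg (y - q)]) hρ.le
  have hyq : dist y q < min ρ₁ ρ₂ := abs_lt_of_sq_lt_sq (by nlinarith [sq_nonneg (x - p)]) hρ.le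
  have hx := hpos (hxp.trans_le (min_le_left _ _))
  have hy := hneg (hyq.trans_le (min_le_right _ _))
  rw [wedge_posPart_negPart (by linarith) (by linarith)]
  gcongr <;> linarith

lemma deriv_neg_of_le_mul_max {F g : ℝ → ℝ} {d' d x₁ M : ℝ} (hF : HasDerivAt F d' x₁)
    (hd' : d' < 0) (hF0 : F x₁ = 0) (hg : HasDerivAt g d x₁) (hg0 : g x₁ = 0) (hM : 0 ≤ M)
    (hle : ∀ x < x₁, F x ≤ M * max (g x) 0) : d < 0 := by
  by_contra! hd
  have hdiff := hF.sub (hg.const_mul M)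
  have hFpos := (eventually_nhdsWithin_sign_eq_of_deriv_neg (hF.deriv.trans_lt hd') hF0).filter_mono
    (nhdsWithin_le_nhds (s := Iio x₁))
  have hdiffpos := (eventually_nhdsWithin_sign_eq_of_deriv_neg
    (hdiff.deriv.trans_lt (by linarith [mul_nonneg hM hd])) (by simp [hF0, hg0])).filter_mono
    (nhdsWithin_le_nhds (s := Iio x₁))
  obtain ⟨x, ⟨hFx, hdiffx⟩, hx⟩ := ((hFpos.and hdiffpos).and self_mem_nhdsWithin).exists
  rw [sign_pos (sub_pos.2 hx), sign_eq_one_iff] at hFx hdiffx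
  have hlex := hle x hx
  simp only [Pi.sub_apply] at hdiffx
  rcases le_total (g x) 0 with hgx | hgx
  · rw [max_eq_right hgx] at hlex
    linarith
  · rw [max_eq_left hgx] at hlex
    linarith

namespace IsLinSol

variable {K K' M M' T ℓ : ℝ} {z v w c : ℝ → ℝ → ℝ}

lemma tendsto_wedge_approx (hv : IsLinSol K M T v c) (hw : IsLinSol K' M' T w c) (hT : 0 ≤ T)
    (hℓ : 0 < ℓ) (x₀ : ℝ) :
    Tendsto (fun n : ℕ ↦ wedge (approx T ℓ x₀ c n fun x ↦ v x 0)
        (approx T ℓ x₀ c n fun x ↦ w x 0) 0 (n + 1)) atTop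
      (𝓝 (wedge (fun x ↦ v x T) (fun x ↦ w x T) x₀ (x₀ + ℓ))) :=
  ((hv.tendsto_approx_left hT hℓ x₀).mul (hw.tendsto_approx_right hT hℓ x₀)).sub
    ((hv.tendsto_approx_right hT hℓ x₀).mul (hw.tendsto_approx_left hT hℓ x₀))

lemma wedge_approx_posPart_negPart_le (hz : IsLinSol K M T z c) (hT : 0 ≤ T) (hℓ : 0 < ℓ)
    (x₀ : ℝ) (n : ℕ) (i j : ℤ) :
    wedge (approx T ℓ x₀ c n (fun x ↦ z x 0)⁺) (approx T ℓ x₀ c n (fun x ↦ z x 0)⁻) i j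
      ≤ exp (2 * K * T) * M * (max (approx T ℓ x₀ c n (fun x ↦ z x 0) i) 0
        + |approx T ℓ x₀ c n (fun x ↦ z x 0) j|) := by
  set φ : ℝ → ℝ := fun x ↦ z x 0
  have hφM : ∀ x, |φ⁺ x| ≤ M := fun x ↦ by
    rw [Pi.posPart_apply, abs_of_nonneg (posPart_nonneg _)]
    exact (sup_le (le_abs_self _) (abs_nonneg _)).trans (hz.abs_le_bound x 0 ⟨le_rfl, hT⟩)
  have hneg : φ⁻ = φ⁺ - φ := by
    rw [eq_sub_iff_add_eq', ← eq_sub_iff_add_eq, posPart_sub_negPart]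
  rw [hneg, map_sub]
  exact wedge_self_sub_le (approx_nonneg hT hℓ hz.coeff_nonneg (posPart_nonneg φ) n)
    (fun i ↦ (le_abs_self _).trans
      (abs_approx_le_const hT hℓ hz.coeff_nonneg hz.coeff_le hφM n i)) i j

-- At a zero `x₁` of `z (·, T)` the limit of the discrete wedge is `P x₁ * z x T`, where `P` is the
-- limit of the evolutions of the positive part of the datum.
lemma heat_wedge_le (hz : IsLinSol K M T z c) (hT : 0 ≤ T) (hup : NoUpcrossing fun x ↦ z x 0)
    {v₁ w₁ v₂ w₂ : ℝ → ℝ → ℝ} {M₁ N₁ M₂ N₂ r₁ r₂ : ℝ} (hv₁ : IsLinSol 0 M₁ T v₁ 0)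
    (hw₁ : IsLinSol 0 N₁ T w₁ 0) (hv₂ : IsLinSol 0 M₂ T v₂ 0) (hw₂ : IsLinSol 0 N₂ T w₂ 0)
    (hle : ∀ x y, x < y → r₁ * wedge (v₁ · 0) (w₁ · 0) x y - r₂ * wedge (v₂ · 0) (w₂ · 0) x y
      ≤ wedge (z · 0)⁺ (z · 0)⁻ x y) {x x₁ : ℝ} (hx : x < x₁) (hx₁ : z x₁ T = 0) :
    r₁ * wedge (v₁ · T) (w₁ · T) x x₁ - r₂ * wedge (v₂ · T) (w₂ · T) x x₁
      ≤ exp (2 * K * T) * M * max (z x T) 0 := by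
  have hℓ : 0 < x₁ - x := sub_pos.2 hx
  have hsub : IsAltNonneg (wedge (z · 0)⁺ (z · 0)⁻
      - (r₁ • wedge (v₁ · 0) (w₁ · 0) - r₂ • wedge (v₂ · 0) (w₂ · 0))) := by
    refine ⟨?_, fun x y hxy ↦ sub_nonneg.2 (hle x y hxy)⟩
    ext x y
    simp only [Function.swap, wedge, Pi.sub_apply, Pi.smul_apply, Pi.neg_apply, smul_eq_mul]
    ring
  have hleft := ((hv₁.tendsto_wedge_approx hw₁ hT hℓ x).const_mul r₁).sub
    ((hv₂.tendsto_wedge_approx hw₂ hT hℓ x).const_mul r₂)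
  have hright := (((hz.tendsto_approx_left hT hℓ x).max (tendsto_const_nhds (x := 0))).add
    (hz.tendsto_approx_right hT hℓ x).abs).const_mul (exp (2 * K * T) * M)
  rw [add_sub_cancel, hx₁, abs_zero, add_zero] at hright
  rw [add_sub_cancel] at hleft
  refine le_of_tendsto_of_tendsto' hleft hright fun n ↦ ?_
  have hdiscrete := (hup.isAltNonneg_wedge.wedge_approx_sub_heat (x₀ := x) hT hℓ hz.coeff_nonneg
    hsub n).nonneg (x := 0) (y := n + 1) (by lia)
  exact (sub_nonneg.1 hdiscrete).trans (hz.wedge_approx_posPart_negPart_le hT hℓ x n 0 (n + 1))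

lemma deriv_neg_of_datum_pos_neg (hz : IsLinSol K M T z c) (hT : 0 < T)
    (hup : NoUpcrossing fun x ↦ z x 0) {p q : ℝ} (hpq : p < q) (hp : 0 < z p 0) (hq : z q 0 < 0)
    {x₁ d : ℝ} (hx₁ : z x₁ T = 0) (hd : HasDerivAt (fun x ↦ z x T) d x₁) : d < 0 := by
  obtain ⟨ρ, hρ, δ, hδ, hnear⟩ :=
    exists_le_wedge_posPart_negPart (hz.continuous_slice ⟨le_rfl, hT.le⟩) hp hq
  obtain ⟨A, hA, σ, hσ, hfar, d', hd', hderiv⟩ :=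
    exists_narrow_gaussWedge_barrier hpq hρ hT x₁
  obtain ⟨r, hr, hbarrier⟩ : ∃ r > 0, ∀ s : {s : ℝ × ℝ // s.1 < s.2},
      r * (A * gaussWedge σ p q 0 s.1.1 s.1.2 - gaussWedge 1 p q 0 s.1.1 s.1.2)
        ≤ wedge (z · 0)⁺ (z · 0)⁻ s.1.1 s.1.2 := by
    refine exists_pos_mul_le (S := {s | (s.1.1 - p) ^ 2 + (s.1.2 - q) ^ 2 < ρ ^ 2})
      (B := A * (exp (-log σ / 2) * exp (-log σ / 2))) (fun s ↦ ?_) (fun s hs ↦ ?_)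
      (fun s ↦ hup.isAltNonneg_wedge.nonneg_of_lt s.2) hδ fun s hs ↦ hnear _ _ (mem_ofPred.1 hs)
    · have hnarrow := mul_le_mul_of_nonneg_left (gaussWedge_le hσ le_rfl p q s.1.1 s.1.2) hA.le
      linarith [gaussWedge_one_nonneg hpq.le s.2.le]
    · exact sub_nonpos.2 (hfar _ _ s.2 (not_lt.1 hs))
  have hexpand : ∀ t x y, r * (A * gaussWedge σ p q t x y - gaussWedge 1 p q t x y)
      = r * A * wedge (gauss σ p · t) (gauss σ q · t) x y
        - r * wedge (gauss 1 p · t) (gauss 1 q · t) x y := fun t x y ↦ by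
    rw [mul_sub, mul_assoc, gaussWedge, gaussWedge]
  refine deriv_neg_of_le_mul_max (hderiv.const_mul r) (mul_neg_of_pos_of_neg hr hd') ?_ hd hx₁
    (mul_nonneg (exp_pos (2 * K * T)).le (hz.bound_nonneg hT.le)) fun x hx ↦ ?_
  · simp only [gaussWedge, wedge]
    ring
  · rw [hexpand]
    exact hz.heat_wedge_le hT.le hup (isLinSol_gauss hσ p T) (isLinSol_gauss hσ q T)
      (isLinSol_gauss one_pos p T) (isLinSol_gauss one_pos q T)
      (fun x y hxy ↦ (hexpand 0 x y).symm.trans_le (hbarrier ⟨(x, y), hxy⟩)) hx hx₁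

lemma datum_eq_zero_of_deriv_nonneg (hz : IsLinSol K M T z c) (hT : 0 < T)
    (hup : NoUpcrossing fun x ↦ z x 0) {x₁ d : ℝ} (hx₁ : z x₁ T = 0)
    (hd : HasDerivAt (fun x ↦ z x T) d x₁) (hd0 : 0 ≤ d) (x : ℝ) : z x 0 = 0 := by
  by_cases hpos : ∃ p, 0 < z p 0
  · obtain ⟨p, hp⟩ := hpos
    by_cases hneg : ∃ q, z q 0 < 0
    · obtain ⟨q, hq⟩ := hneg
      have hpq : p < q := by
        by_contra! hqp
        rcases hqp.eq_or_lt with rfl | hlt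
        · exact hp.not_gt hq
        · exact hp.not_ge (hup hlt hq)
      exact absurd (hz.deriv_neg_of_datum_pos_neg hT hup hpq hp hq hx₁ hd) hd0.not_gt
    · push Not at hneg
      exact absurd hx₁ (hz.pos_of_datum_nonneg hT hneg hp x₁).ne'
  · push Not at hpos
    by_contra hx
    have hneg : IsLinSol K (|(-1 : ℝ)| * M) T (fun x t ↦ -1 * z x t) c := hz.const_mul (-1)
    have := hneg.pos_of_datum_nonneg hT (fun y ↦ by linarith [hpos y]) (p := x)
      (by linarith [(hpos x).lt_of_ne hx]) x₁
    linarith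

end IsLinSol

end ZeroNumber

/-! ### Differences of solutions of the semilinear equation -/

/-- `f t` is Lipschitz on bounded subsets of `[0, ∞)`, locally uniformly in `t`: the regularity of
the nonlinearity under which differences of nonnegative solutions solve linear equations. -/
def IsLocallyLipschitzInState (f : ℝ → ℝ → ℝ) : Prop :=
  ∀ s t B : ℝ, ∃ Λ : NNReal, ∀ τ ∈ Icc s t, LipschitzOnWith Λ (f τ) (Icc 0 B)

lemma isLocallyLipschitzInState_of_contDiff {f : ℝ → ℝ → ℝ}
    (hf : ContDiff ℝ 1 (Function.uncurry f)) : IsLocallyLipschitzInState f := fun s t B ↦ by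
  obtain ⟨Λ, hΛ⟩ := hf.locallyLipschitz.locallyLipschitzOn.exists_lipschitzOnWith_of_compact
    ((isCompact_Icc (a := s) (b := t)).prod (isCompact_Icc (a := (0 : ℝ)) (b := B)))
  refine ⟨Λ * 1, fun τ hτ ↦ ?_⟩
  exact hΛ.comp (LipschitzWith.prodMk_left τ).lipschitzOnWith fun v hv ↦ ⟨hτ, hv⟩

namespace IsSolOn

variable {f u v : ℝ → ℝ → ℝ} {I J : Set ℝ}

lemma mono (hu : IsSolOn f u I) (hJ : J ⊆ I) : IsSolOn f u J := by
  obtain ⟨ut, ux, uxx, hut, hux, huxx, hcont_ut, hcont_ux, hcont_uxx, heq⟩ := hu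
  have hsub : (univ : Set ℝ) ×ˢ J ⊆ univ ×ˢ I := prod_mono subset_rfl hJ
  exact ⟨ut, ux, uxx, fun x t ht ↦ hut x t (hJ ht), fun x t ht ↦ hux x t (hJ ht),
    fun x t ht ↦ huxx x t (hJ ht), hcont_ut.mono hsub, hcont_ux.mono hsub, hcont_uxx.mono hsub,
    fun x t ht ↦ heq x t (hJ ht)⟩

lemma shift (hu : IsSolOn f u I) (y s : ℝ) (hJ : MapsTo (· + s) J I) :
    IsSolOn (fun t ↦ f (t + s)) (fun x t ↦ u (x + y) (t + s)) J := by
  obtain ⟨ut, ux, uxx, hut, hux, huxx, hcont_ut, hcont_ux, hcont_uxx, heq⟩ := hu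
  have hmaps : MapsTo (fun p : ℝ × ℝ ↦ (p.1 + y, p.2 + s)) (univ ×ˢ J) (univ ×ˢ I) :=
    fun p hp ↦ ⟨trivial, hJ hp.2⟩
  have hcont : ContinuousOn (fun p : ℝ × ℝ ↦ (p.1 + y, p.2 + s)) (univ ×ˢ J) := by fun_prop
  exact ⟨fun x t ↦ ut (x + y) (t + s), fun x t ↦ ux (x + y) (t + s),
    fun x t ↦ uxx (x + y) (t + s), fun x t ht ↦ (hut _ _ (hJ ht)).comp_add_const t s,
    fun x t ht ↦ (hux _ _ (hJ ht)).comp_add_const x y,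
    fun x t ht ↦ (huxx _ _ (hJ ht)).comp_add_const x y, hcont_ut.comp hcont hmaps,
    hcont_ux.comp hcont hmaps, hcont_uxx.comp hcont hmaps, fun x t ht ↦ heq _ _ (hJ ht)⟩

lemma differentiable_slice (hu : IsSolOn f u I) {t : ℝ} (ht : t ∈ I) :
    Differentiable ℝ fun x ↦ u x t := by
  obtain ⟨_, _, _, _, hux, _⟩ := hu
  exact fun x ↦ (hux x t ht).differentiableAt

lemma continuousOn {t₀ t₁ : ℝ} (hu : IsSolOn f u (Icc t₀ t₁)) :
    ContinuousOn (fun p : ℝ × ℝ ↦ u p.1 p.2) (univ ×ˢ Icc t₀ t₁) := by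
  obtain ⟨ut, ux, uxx, hut, hux, -, -, hcont_ux, -⟩ := hu
  rintro ⟨x, t⟩ ⟨-, ht⟩
  obtain ⟨C, hC⟩ := ((isCompact_Icc (a := x - 1) (b := x + 1)).prod
    (isCompact_Icc (a := t₀) (b := t₁))).exists_bound_of_continuousOn
    (hcont_ux.mono (prod_mono (subset_univ _) subset_rfl))
  have hlocal : ContinuousOn (fun p : ℝ × ℝ ↦ u p.1 p.2)
      (Icc (x - 1) (x + 1) ×ˢ Icc t₀ t₁) := by
    refine continuousOn_prod_of_continuousOn_lipschitzOnWith _ C.toNNReal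
      (fun y _ s hs ↦ (hut y s hs).continuousAt.continuousWithinAt) (fun s hs ↦ ?_)
    refine (convex_Icc (x - 1) (x + 1)).lipschitzOnWith_of_nnnorm_hasDerivWithin_le
      (f' := fun y ↦ ux y s) (fun y _ ↦ (hux y s hs).hasDerivWithinAt) (fun y hy ↦ ?_)
    rw [← NNReal.coe_le_coe, coe_nnnorm]
    exact (hC (y, s) ⟨hy, hs⟩).trans (le_coe_toNNReal _)
  refine (hlocal (x, t) ⟨⟨by linarith, by linarith⟩, ht⟩).mono_of_mem_nhdsWithin ?_
  rw [nhdsWithin_prod_eq, nhdsWithin_univ]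
  exact prod_mem_prod (Icc_mem_nhds (by linarith) (by linarith)) self_mem_nhdsWithin

end IsSolOn

namespace ZeroNumber

/-- The coefficient of the linear equation solved by `exp (Λ * t) * (u - v)` on `[0, T]`, for two
solutions `u` and `v` of (E). It is truncated to `0` outside `[0, T]`; where `u` and `v` agree the
slope has the junk value `0`, which does not affect the equation. -/
def diffCoeff (f u v : ℝ → ℝ → ℝ) (Λ T x : ℝ) : ℝ → ℝ :=
  (Icc 0 T).indicator fun t ↦ Λ + slope (f t) (v x t) (u x t)

lemma abs_slope_le_of_lipschitzOnWith {g : ℝ → ℝ} {Λ : NNReal} {S : Set ℝ}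
    (hg : LipschitzOnWith Λ g S) {a b : ℝ} (ha : a ∈ S) (hb : b ∈ S) : |slope g a b| ≤ Λ := by
  rw [slope_def_field, abs_div]
  exact div_le_of_le_mul₀ (abs_nonneg _) Λ.2 (hg.dist_le_mul b hb a ha)

variable {f u v : ℝ → ℝ → ℝ} {T B : ℝ} {Λ : NNReal}

lemma diffCoeff_mem_Icc (hub : ∀ x, ∀ t ∈ Icc 0 T, u x t ∈ Icc 0 B)
    (hvb : ∀ x, ∀ t ∈ Icc 0 T, v x t ∈ Icc 0 B)
    (hfL : ∀ t ∈ Icc 0 T, LipschitzOnWith Λ (f t) (Icc 0 B)) (x t : ℝ) :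
    diffCoeff f u v Λ T x t ∈ Icc (0 : ℝ) (2 * Λ) := by
  by_cases ht : t ∈ Icc 0 T
  · rw [diffCoeff, indicator_of_mem ht]
    have hslope := abs_le.1 (abs_slope_le_of_lipschitzOnWith (hfL t ht) (hvb x t ht) (hub x t ht))
    constructor <;> linarith
  · rw [diffCoeff, indicator_of_notMem ht]
    exact ⟨le_rfl, by positivity⟩

lemma diffCoeff_mul_sub {t : ℝ} (ht : t ∈ Icc 0 T) (x : ℝ) :
    diffCoeff f u v Λ T x t * (u x t - v x t)
      = Λ * (u x t - v x t) + (f t (u x t) - f t (v x t)) := by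
  rw [diffCoeff, indicator_of_mem ht, add_mul, ← vsub_eq_sub (f t (u x t)), ← sub_smul_slope,
    smul_eq_mul, mul_comm (slope _ _ _)]

lemma isLinSol_exp_mul_sub (hu : IsSolOn f u (Icc 0 T)) (hv : IsSolOn f v (Icc 0 T))
    (hub : ∀ x, ∀ t ∈ Icc 0 T, u x t ∈ Icc 0 B) (hvb : ∀ x, ∀ t ∈ Icc 0 T, v x t ∈ Icc 0 B)
    (hfL : ∀ t ∈ Icc 0 T, LipschitzOnWith Λ (f t) (Icc 0 B)) :
    IsLinSol (2 * Λ) (exp (Λ * T) * B) T (fun x t ↦ exp (Λ * t) * (u x t - v x t))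
      (diffCoeff f u v Λ T) := by
  have hcont_sub := hu.continuousOn.sub hv.continuousOn
  obtain ⟨ut, ux, uxx, hut, hux, huxx, hcont_ut, -, hcont_uxx, heq_u⟩ := hu
  obtain ⟨vt, vx, vxx, hvt, hvx, hvxx, hcont_vt, -, hcont_vxx, heq_v⟩ := hv
  have hexp : ∀ t : ℝ, HasDerivAt (fun t ↦ exp (Λ * t)) (exp (Λ * t) * (Λ * 1)) t := fun t ↦
    ((hasDerivAt_id t).const_mul (Λ : ℝ)).exp
  have hcont_exp : ContinuousOn (fun p : ℝ × ℝ ↦ exp (Λ * p.2)) (univ ×ˢ Icc 0 T) := by fun_prop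
  refine ⟨fun x t ht ↦ ?_, fun x t ↦ (diffCoeff_mem_Icc hub hvb hfL x t).1,
    fun x t ↦ (diffCoeff_mem_Icc hub hvb hfL x t).2,
    fun x t ↦ exp (Λ * t) * (Λ * 1) * (u x t - v x t) + exp (Λ * t) * (ut x t - vt x t),
    fun x t ↦ exp (Λ * t) * (ux x t - vx x t), fun x t ↦ exp (Λ * t) * (uxx x t - vxx x t),
    fun x t ht ↦ (hexp t).mul ((hut x t ht).sub (hvt x t ht)),
    fun x t ht ↦ ((hux x t ht).sub (hvx x t ht)).const_mul _,
    fun x t ht ↦ ((huxx x t ht).sub (hvxx x t ht)).const_mul _,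
    ((hcont_exp.mul continuousOn_const).mul hcont_sub).add
      (hcont_exp.mul (hcont_ut.sub hcont_vt)),
    hcont_exp.mul (hcont_uxx.sub hcont_vxx), fun x t ht ↦ ?_⟩
  · rw [abs_mul, abs_of_pos (exp_pos _)]
    gcongr
    · exact ht.2
    · simpa using abs_sub_le_of_le_of_le (hub x t ht).1 (hub x t ht).2 (hvb x t ht).1
        (hvb x t ht).2
  · dsimp only
    rw [heq_u x t ht, heq_v x t ht, mul_left_comm (diffCoeff ..), diffCoeff_mul_sub ht]
    ring

lemma exists_isLinSol_exp_mul_sub {t₀ t₁ : ℝ} (hu : IsSolOn f u (Icc t₀ t₁))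
    (hv : IsSolOn f v (Icc t₀ t₁)) (hub : ∀ x, ∀ t ∈ Icc t₀ t₁, u x t ∈ Icc 0 B)
    (hvb : ∀ x, ∀ t ∈ Icc t₀ t₁, v x t ∈ Icc 0 B)
    (hfL : ∀ t ∈ Icc t₀ t₁, LipschitzOnWith Λ (f t) (Icc 0 B)) :
    ∃ M c, IsLinSol (2 * Λ) M (t₁ - t₀)
      (fun x t ↦ exp (Λ * t) * (u x (t + t₀) - v x (t + t₀))) c := by
  have hshift : MapsTo (· + t₀) (Icc 0 (t₁ - t₀)) (Icc t₀ t₁) := fun t ht ↦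
    ⟨le_add_of_nonneg_left ht.1, le_sub_iff_add_le.1 ht.2⟩
  have hlin := isLinSol_exp_mul_sub (hu.shift 0 t₀ hshift) (hv.shift 0 t₀ hshift)
    (fun x t ht ↦ hub (x + 0) _ (hshift ht)) (fun x t ht ↦ hvb (x + 0) _ (hshift ht))
    (fun t ht ↦ hfL _ (hshift ht))
  simp only [add_zero] at hlin
  exact ⟨_, _, hlin⟩

/-! ### The sign pattern of the Heaviside solution -/

lemma noUpcrossing_sub_of_isAltNonneg_wedge {X : Type*} [Preorder X] {P N : X → ℝ}
    (hP : 0 ≤ P) (hN : 0 ≤ N) (hPN : IsAltNonneg (wedge P N)) : NoUpcrossing (P - N) := by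
  intro x y hxy hx
  by_contra! hy
  rw [Pi.sub_apply] at hx hy
  have hwedge : 0 ≤ P x * N y - P y * N x := hPN.nonneg_of_lt hxy
  have hNx : 0 < N x := (hP x).trans_lt (sub_neg.1 hx)
  linarith [mul_pos hy hNx, mul_nonneg (hN y) (neg_nonneg.2 hx.le)]

lemma NoUpcrossing.approx {T ℓ x₀ : ℝ} {c : ℝ → ℝ → ℝ} {g : ℝ → ℝ} (hg : NoUpcrossing g)
    (hT : 0 ≤ T) (hℓ : 0 < ℓ) (hc : 0 ≤ c) (n : ℕ) :
    NoUpcrossing (ZeroNumber.approx T ℓ x₀ c n g) := by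
  rw [← posPart_sub_negPart g, map_sub]
  exact noUpcrossing_sub_of_isAltNonneg_wedge (approx_nonneg hT hℓ hc (posPart_nonneg g) n)
    (approx_nonneg hT hℓ hc (negPart_nonneg g) n) (hg.isAltNonneg_wedge.wedge_approx hT hℓ hc n)

lemma IsLinSol.le_of_abs_datum_sub_le {K M T : ℝ} {z c : ℝ → ℝ → ℝ} (hz : IsLinSol K M T z c)
    (hT : 0 ≤ T) {g e : ℝ → ℝ} (hg : NoUpcrossing g) (hge : ∀ x, |z x 0 - g x| ≤ e x)
    {x y ex ey : ℝ} (hxy : x < y)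
    (hex : Tendsto (fun n ↦ approx T (y - x) x 0 n e 0) atTop (𝓝 ex))
    (hey : Tendsto (fun n : ℕ ↦ approx T (y - x) x 0 n e (n + 1)) atTop (𝓝 ey))
    (hx : z x T < -(exp (2 * K * T) * ex)) : z y T ≤ exp (2 * K * T) * ey := by
  have hℓ : 0 < y - x := sub_pos.2 hxy
  have herror : ∀ (n : ℕ) (i : ℤ), |approx T (y - x) x c n (fun x ↦ z x 0) i
      - approx T (y - x) x c n g i| ≤ exp (2 * K * T) * approx T (y - x) x 0 n e i := fun n i ↦ by
    simpa only [map_sub, Pi.abs_apply, Pi.sub_apply, Pi.smul_apply, smul_eq_mul] using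
      abs_approx_le (x₀ := x) (v := (fun x ↦ z x 0) - g) (w := e) hT hℓ hz.coeff_nonneg
        hz.coeff_le hge n i
  have hleft := (hz.tendsto_approx_left hT hℓ x).add (hex.const_mul (exp (2 * K * T)))
  have hright := hz.tendsto_approx_right hT hℓ x
  rw [add_sub_cancel] at hright
  refine le_of_tendsto_of_tendsto hright (hey.const_mul (exp (2 * K * T))) ?_
  filter_upwards [hleft.eventually_lt_const (lt_neg_iff_add_neg.1 hx)] with n hn
  have hgx : approx T (y - x) x c n g 0 < 0 := by linarith [(abs_le.1 (herror n 0)).1]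
  have hgy := hg.approx (x₀ := x) hT hℓ hz.coeff_nonneg n (by lia : (0 : ℤ) < n + 1) hgx
  linarith [(abs_le.1 (herror n (n + 1))).2]

/-- An upper bound, evolved by the heat equation to time `t`, for the deviation of a datum bounded
by `B` from a datum without upcrossings: `θ` in an annulus around `a`, a small multiple of
`(x - a) ^ 2` outside of it, and a narrow Gaussian inside. -/
def tolerance (B θ a x t : ℝ) : ℝ := θ * (1 + ((x - a) ^ 2 + 2 * t) + 2 * B * gauss (θ ^ 2) a x t)

section Tolerance

variable {B θ a T ℓ x₀ : ℝ}

lemma tendsto_approx_tolerance (hθ : 0 < θ) (hT : 0 ≤ T) (hℓ : 0 < ℓ) {y : ℝ} {i : ℕ → ℤ}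
    (hi : ∀ n, mesh ℓ n * i n = y) :
    Tendsto (fun n ↦ approx T ℓ x₀ 0 n (fun x ↦ tolerance B θ a x 0) (i n)) atTop
      (𝓝 (tolerance B θ a (x₀ + y) T)) := by
  have hdatum : (fun x ↦ tolerance B θ a x 0) = θ • ((fun _ ↦ (1 : ℝ)) + (fun x ↦ (x - a) ^ 2)
      + (2 * B) • fun x ↦ gauss (θ ^ 2) a x 0) := by
    ext x
    simp only [tolerance, mul_zero, add_zero, Pi.smul_apply, Pi.add_apply, smul_eq_mul]
  have hgauss := (isLinSol_gauss (pow_pos hθ 2) a T).tendsto_approx hT hℓ x₀ hi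
  simp only [hdatum, map_smul, map_add, approx_heat_const, approx_heat_sq T x₀ a hℓ,
    Pi.smul_apply, Pi.add_apply, smul_eq_mul, hi]
  exact ((hgauss.const_mul (2 * B)).const_add _).const_mul θ

lemma tolerance_nonneg (hB : 0 ≤ B) (hθ : 0 ≤ θ) (x : ℝ) {t : ℝ} (ht : 0 ≤ t) :
    0 ≤ tolerance B θ a x t := by
  have := gauss_pos (θ ^ 2) a x t
  unfold tolerance
  positivity

lemma tolerance_le (hB : 0 ≤ B) (hθ : 0 ≤ θ) (x : ℝ) {r s t : ℝ} (hr : 0 < r) (hrt : r ≤ t)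
    (hts : t ≤ s) :
    tolerance B θ a x t ≤ θ * (1 + ((x - a) ^ 2 + 2 * s) + 2 * B * exp (-log r / 2)) := by
  have hgauss : gauss (θ ^ 2) a x t ≤ exp (-log r / 2) :=
    gauss_le hr (hrt.trans (le_add_of_nonneg_left (sq_nonneg θ))) a x
  unfold tolerance
  gcongr

lemma one_le_mul_gauss_sq {x : ℝ} (hθ : 0 < θ) (hx : |x - a| ≤ θ) :
    1 ≤ 2 * θ * gauss (θ ^ 2) a x 0 := by
  have hquot : (x - a) ^ 2 / (4 * θ ^ 2) ≤ 1 / 4 := by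
    rw [div_le_iff₀ (by positivity), ← sq_abs (x - a)]
    nlinarith [pow_le_pow_left₀ (abs_nonneg _) hx 2]
  have hgauss : exp (-(1 / 4)) / θ ≤ gauss (θ ^ 2) a x 0 := by
    rw [gauss, ← exp_log hθ, ← exp_sub, exp_log hθ, exp_le_exp, add_zero, log_pow, neg_div]
    push_cast
    linarith
  calc (1 : ℝ) = 2 * θ * (1 / 2 / θ) := by field_simp
    _ ≤ 2 * θ * (exp (-(1 / 4)) / θ) := by
        gcongr
        linarith [add_one_le_exp (-(1 / 4) : ℝ)]
    _ ≤ 2 * θ * gauss (θ ^ 2) a x 0 := by gcongr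

lemma le_tolerance_zero (hB : 0 ≤ B) (hθ : 0 < θ) {x r : ℝ} (hrB : r ≤ B)
    (hr : θ < |x - a| → |x - a| < √(B / θ) → r ≤ θ) : r ≤ tolerance B θ a x 0 := by
  have hquad : 0 ≤ θ * (x - a) ^ 2 := by positivity
  have hgauss : 0 ≤ B * (2 * θ * gauss (θ ^ 2) a x 0) := by
    have := gauss_pos (θ ^ 2) a x 0
    positivity
  have hexpand : tolerance B θ a x 0
      = θ + θ * (x - a) ^ 2 + B * (2 * θ * gauss (θ ^ 2) a x 0) := by
    unfold tolerance
    ring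
  rw [hexpand]
  rcases le_or_gt |x - a| θ with hnear | hnear
  · linarith [mul_le_mul_of_nonneg_left (one_le_mul_gauss_sq hθ hnear) hB]
  rcases lt_or_ge |x - a| √(B / θ) with hfar | hfar
  · linarith [hr hnear hfar]
  · have hsq : B ≤ (x - a) ^ 2 * θ := by
      rw [← div_le_iff₀ hθ, ← sq_abs]
      exact (Real.sqrt_le_left (abs_nonneg _)).1 hfar
    linarith

end Tolerance

/-- The truncation of `ζ` to its positive part left of `a` and to its negative part right of `a`. -/
def signCut (a : ℝ) (ζ : ℝ → ℝ) (x : ℝ) : ℝ := if x ≤ a then (ζ x)⁺ else -(ζ x)⁻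

lemma noUpcrossing_signCut (a : ℝ) (ζ : ℝ → ℝ) : NoUpcrossing (signCut a ζ) := by
  intro x y hxy hx
  have hxa : ¬x ≤ a := fun hxa ↦ hx.not_ge (by rw [signCut, if_pos hxa]; exact posPart_nonneg _)
  rw [signCut, if_neg fun hya ↦ hxa (hxy.le.trans hya)]
  exact neg_nonpos.2 (negPart_nonneg _)

lemma abs_sub_signCut (a : ℝ) (ζ : ℝ → ℝ) (x : ℝ) :
    |ζ x - signCut a ζ x| = if x ≤ a then (ζ x)⁻ else (ζ x)⁺ := by
  have hsplit := posPart_sub_negPart (ζ x)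
  rw [signCut]
  split_ifs
  · rw [show ζ x - (ζ x)⁺ = -(ζ x)⁻ by linarith, abs_neg, abs_of_nonneg (negPart_nonneg _)]
  · rw [show ζ x - -(ζ x)⁻ = (ζ x)⁺ by linarith, abs_of_nonneg (posPart_nonneg _)]

lemma abs_sub_signCut_le_tolerance {B θ a : ℝ} {ζ : ℝ → ℝ} (hB : 0 ≤ B) (hθ : 0 < θ)
    (hζB : ∀ x, |ζ x| ≤ B)
    (hleft : ∀ x ≤ a, θ < |x - a| → |x - a| < √(B / θ) → -θ ≤ ζ x)
    (hright : ∀ x > a, θ < |x - a| → |x - a| < √(B / θ) → ζ x ≤ θ) (x : ℝ) :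
    |ζ x - signCut a ζ x| ≤ tolerance B θ a x 0 := by
  rw [abs_sub_signCut]
  have hζ := abs_le.1 (hζB x)
  split_ifs with hxa
  · exact le_tolerance_zero hB hθ (sup_le (by linarith) hB) fun hnear hfar ↦
      sup_le (by linarith [hleft x hxa hnear hfar]) hθ.le
  · exact le_tolerance_zero hB hθ (sup_le hζ.2 hB) fun hnear hfar ↦
      sup_le (hright x (not_le.1 hxa) hnear hfar) hθ.le

lemma sub_le_of_sub_lt {f u v : ℝ → ℝ → ℝ} {t₀ t₁ B θ a : ℝ} {Λ : NNReal}
    (hu : IsSolOn f u (Icc t₀ t₁)) (hv : IsSolOn f v (Icc t₀ t₁)) (ht : t₀ ≤ t₁)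
    (hub : ∀ x, ∀ t ∈ Icc t₀ t₁, u x t ∈ Icc 0 B) (hvb : ∀ x, ∀ t ∈ Icc t₀ t₁, v x t ∈ Icc 0 B)
    (hfL : ∀ t ∈ Icc t₀ t₁, LipschitzOnWith Λ (f t) (Icc 0 B)) (hθ : 0 < θ)
    (hleft : ∀ x ≤ a, θ < |x - a| → |x - a| < √(B / θ) → -θ ≤ u x t₀ - v x t₀)
    (hright : ∀ x > a, θ < |x - a| → |x - a| < √(B / θ) → u x t₀ - v x t₀ ≤ θ)
    {x y : ℝ} (hxy : x < y)
    (hx : u x t₁ - v x t₁ < -(exp (4 * Λ * (t₁ - t₀)) * tolerance B θ a x (t₁ - t₀))) :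
    u y t₁ - v y t₁ ≤ exp (4 * Λ * (t₁ - t₀)) * tolerance B θ a y (t₁ - t₀) := by
  have ht₀ : t₀ ∈ Icc t₀ t₁ := ⟨le_rfl, ht⟩
  have hT : 0 ≤ t₁ - t₀ := sub_nonneg.2 ht
  have hℓ : 0 < y - x := sub_pos.2 hxy
  have hB : 0 ≤ B := (hub 0 t₀ ht₀).1.trans (hub 0 t₀ ht₀).2
  have hexp : 1 ≤ exp (Λ * (t₁ - t₀)) := one_le_exp (mul_nonneg Λ.2 hT)
  have htol : ∀ x, 0 ≤ exp (4 * Λ * (t₁ - t₀)) * tolerance B θ a x (t₁ - t₀) := fun x ↦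
    mul_nonneg (exp_pos _).le (tolerance_nonneg hB hθ.le x hT)
  have hdatum := abs_sub_signCut_le_tolerance hB hθ (fun x ↦ by
    simpa only [sub_zero] using abs_sub_le_of_le_of_le (hub x t₀ ht₀).1 (hub x t₀ ht₀).2
      (hvb x t₀ ht₀).1 (hvb x t₀ ht₀).2) hleft hright
  obtain ⟨M, c, hz⟩ := exists_isLinSol_exp_mul_sub hu hv hub hvb hfL
  have hlin := hz.le_of_abs_datum_sub_le hT (noUpcrossing_signCut a _)
    (fun x ↦ by simpa only [mul_zero, exp_zero, one_mul, zero_add] using hdatum x) hxy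
    (tendsto_approx_tolerance hθ hT hℓ (i := fun _ ↦ 0) (y := 0) fun n ↦ by simp)
    (tendsto_approx_tolerance hθ hT hℓ (i := fun n ↦ n + 1) fun n ↦ mesh_mul_succ _ n)
  rw [sub_add_cancel, add_zero, add_sub_cancel, ← mul_assoc 2, show (2 * 2 : ℝ) = 4 by norm_num]
    at hlin
  by_contra! hy
  refine hy.not_ge ((le_mul_of_one_le_left ((htol y).trans hy.le) hexp).trans (hlin ?_))
  exact (mul_le_of_one_le_left (hx.le.trans (neg_nonpos.2 (htol x))) hexp).trans_lt hx

end ZeroNumber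

open ZeroNumber

namespace IsHeavisideSol

variable {f u v : ℝ → ℝ → ℝ} {α a : ℝ} {ω : ℝ → ℝ}

lemma eventually_sub_near_pattern (hu : IsHeavisideSol f α a ω u) (hω : ContinuousAt ω 0)
    (hω0 : ω 0 = α) (hv : ∀ x, ∀ t > 0, v x t ∈ Icc 0 (ω t)) {θ : ℝ} (hθ : 0 < θ) (R : ℝ) :
    ∀ᶠ t in 𝓝[>] 0, (∀ x ≤ a, θ < |x - a| → |x - a| < R → -θ ≤ u x t - v x t) ∧
      ∀ x > a, θ < |x - a| → |x - a| < R → u x t - v x t ≤ θ := by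
  obtain ⟨δ, hδ, hdatum⟩ := hu.2.2 (Icc (a - R) (a - θ) ∪ Icc (a + θ) (a + R))
    (isCompact_Icc.union isCompact_Icc)
    (by rintro (h | h); exacts [by linarith [h.2], by linarith [h.1]]) (θ / 2) (half_pos hθ)
  have hωα : ∀ᶠ t in 𝓝[>] 0, ω t < α + θ / 2 :=
    (hω.eventually_lt_const (by linarith)).filter_mono nhdsWithin_le_nhds
  filter_upwards [hωα, Ioo_mem_nhdsGT hδ] with t hωt ht
  constructor
  · intro x hxa hnear hfar
    rw [abs_of_nonpos (sub_nonpos.2 hxa)] at hnear hfar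
    have hux := hdatum t ht x (.inl ⟨by linarith, by linarith⟩)
    rw [if_pos (sub_nonneg.2 hxa), mul_one] at hux
    linarith [(abs_lt.1 hux).1, (hv x t ht.1).2]
  · intro x hxa hnear hfar
    rw [abs_of_pos (sub_pos.2 hxa)] at hnear hfar
    have hux := hdatum t ht x (.inr ⟨by linarith, by linarith⟩)
    rw [if_neg (by linarith), mul_zero, sub_zero] at hux
    linarith [(abs_lt.1 hux).2, (hv x t ht.1).1]

lemma exists_pattern_up_to (hu : IsHeavisideSol f α a ω u) (hf : IsLocallyLipschitzInState f)
    (hω : Continuous ω) (hω0 : ω 0 = α) (hv : IsSolOn f v (Ioi 0))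
    (hvω : ∀ x, ∀ t > 0, v x t ∈ Icc 0 (ω t)) {s : ℝ} (hs : 0 < s) :
    ∃ C : ℝ → ℝ, ∀ θ > 0, ∀ x y, x < y → u x s - v x s < -(θ * C x) →
      u y s - v y s ≤ θ * C y := by
  obtain ⟨B, hωB⟩ := (isCompact_Icc (a := 0) (b := s)).exists_bound_of_continuousOn
    hω.continuousOn
  have hB : 0 ≤ B := (norm_nonneg _).trans (hωB 0 ⟨le_rfl, hs.le⟩)
  obtain ⟨Λ, hfL⟩ := hf 0 s B
  refine ⟨fun x ↦ exp (4 * Λ * s) * (1 + ((x - a) ^ 2 + 2 * s) + 2 * B * exp (-log (s / 2) / 2)),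
    fun θ hθ x y hxy hx ↦ ?_⟩
  obtain ⟨ε, ⟨hleft, hright⟩, hε, hεs⟩ :=
    ((hu.eventually_sub_near_pattern hω.continuousAt hω0 hvω hθ √(B / θ)).and
      (Ioo_mem_nhdsGT (half_pos hs))).exists
  have hpos : Icc ε s ⊆ Ioi 0 := fun t ht ↦ hε.trans_le ht.1
  have hsub : Icc ε s ⊆ Icc 0 s := Icc_subset_Icc_left hε.le
  have hmem_B : ∀ w : ℝ → ℝ → ℝ, (∀ x, ∀ t > 0, w x t ∈ Icc 0 (ω t)) →
      ∀ x, ∀ t ∈ Icc ε s, w x t ∈ Icc 0 B := fun w hw x t ht ↦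
    Icc_subset_Icc_right ((le_abs_self _).trans (hωB t (hsub ht))) (hw x t (hpos ht))
  have htol : ∀ x, exp (4 * Λ * (s - ε)) * tolerance B θ a x (s - ε) ≤ θ * (exp (4 * Λ * s)
      * (1 + ((x - a) ^ 2 + 2 * s) + 2 * B * exp (-log (s / 2) / 2))) := fun x ↦ by
    rw [mul_left_comm]
    gcongr
    · exact tolerance_nonneg hB hθ.le x (by linarith)
    · linarith
    · exact tolerance_le hB hθ.le x (half_pos hs) (by linarith) (by linarith)
  exact (sub_le_of_sub_lt (hu.1.mono hpos) (hv.mono hpos) (by linarith) (hmem_B u hu.2.1)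
    (hmem_B v hvω) (fun t ht ↦ hfL t (hsub ht)) hθ hleft hright hxy
    (hx.trans_le (neg_le_neg (htol x)))).trans (htol y)

lemma noUpcrossing_sub (hu : IsHeavisideSol f α a ω u) (hf : IsLocallyLipschitzInState f)
    (hω : Continuous ω) (hω0 : ω 0 = α) (hv : IsSolOn f v (Ioi 0))
    (hvω : ∀ x, ∀ t > 0, v x t ∈ Icc 0 (ω t)) {s : ℝ} (hs : 0 < s) :
    NoUpcrossing fun x ↦ u x s - v x s := by
  obtain ⟨C, hC⟩ := hu.exists_pattern_up_to hf hω hω0 hv hvω hs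
  intro x y hxy hx
  have hlim : ∀ r : ℝ, Tendsto (fun θ : ℝ ↦ θ * r) (𝓝[>] 0) (𝓝 0) := fun r ↦
    ((continuous_mul_const r).tendsto' 0 0 (zero_mul r)).mono_left nhdsWithin_le_nhds
  refine ge_of_tendsto (hlim (C y)) ?_
  have hsmall : ∀ᶠ θ in 𝓝[>] (0 : ℝ), u x s - v x s < -(θ * C x) :=
    (hlim (C x)).neg.eventually_const_lt (by rwa [neg_zero])
  filter_upwards [hsmall, self_mem_nhdsWithin] with θ hθx hθ
  exact hC θ hθ x y hxy hθx

end IsHeavisideSol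

/-! ### Entire solutions -/

namespace ZeroNumber

variable {f u v : ℝ → ℝ → ℝ} {ω : ℝ → ℝ} {x₁ t₁ : ℝ}

lemma exists_isLinSol_exp_mul_sub_of_entire (hf : IsLocallyLipschitzInState f)
    (hω : Continuous ω) (hu : IsSolOn f u univ) (hv : IsSolOn f v univ)
    (huω : ∀ x t, u x t ∈ Icc 0 (ω t)) (hvω : ∀ x t, v x t ∈ Icc 0 (ω t)) (s t : ℝ) :
    ∃ Λ K M c, IsLinSol K M (t - s)
      (fun x τ ↦ exp (Λ * τ) * (u x (τ + s) - v x (τ + s))) c := by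
  obtain ⟨B, hB⟩ := (isCompact_Icc (a := s) (b := t)).bddAbove_image hω.continuousOn
  have hIcc : ∀ τ ∈ Icc s t, Icc 0 (ω τ) ⊆ Icc 0 B := fun τ hτ ↦
    Icc_subset_Icc_right (hB (mem_image_of_mem ω hτ))
  obtain ⟨Λ, hΛ⟩ := hf s t B
  obtain ⟨M, c, hz⟩ := exists_isLinSol_exp_mul_sub (hu.mono (subset_univ _))
    (hv.mono (subset_univ _)) (fun x τ hτ ↦ hIcc τ hτ (huω x τ))
    (fun x τ hτ ↦ hIcc τ hτ (hvω x τ)) hΛ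
  exact ⟨Λ, _, M, c, hz⟩

lemma eq_of_le_of_forall_eq (hf : IsLocallyLipschitzInState f) (hω : Continuous ω)
    (hu : IsSolOn f u univ) (hv : IsSolOn f v univ) (huω : ∀ x t, u x t ∈ Icc 0 (ω t))
    (hvω : ∀ x t, v x t ∈ Icc 0 (ω t)) {s t : ℝ} (hst : s ≤ t) (heq : ∀ x, u x s = v x s)
    (x : ℝ) : u x t = v x t := by
  obtain ⟨Λ, K, M, c, hz⟩ := exists_isLinSol_exp_mul_sub_of_entire hf hω hu hv huω hvω s t
  have hzero := hz.eq_zero_of_datum_eq_zero (sub_nonneg.2 hst) (fun y ↦ by simp [heq y]) x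
  rw [sub_add_cancel] at hzero
  exact sub_eq_zero.1 ((mul_eq_zero.1 hzero).resolve_left (exp_pos _).ne')

lemma eq_of_lt_of_deriv_le (hf : IsLocallyLipschitzInState f) (hω : Continuous ω)
    (hu : IsSolOn f u univ) (hv : IsSolOn f v univ) (huω : ∀ x t, u x t ∈ Icc 0 (ω t))
    (hvω : ∀ x t, v x t ∈ Icc 0 (ω t)) {s : ℝ} (hs : s < t₁)
    (hup : NoUpcrossing fun x ↦ u x s - v x s) (heq : u x₁ t₁ = v x₁ t₁)
    (hderiv : deriv (fun y ↦ v y t₁) x₁ ≤ deriv (fun y ↦ u y t₁) x₁) (x : ℝ) :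
    u x s = v x s := by
  obtain ⟨Λ, K, M, c, hz⟩ := exists_isLinSol_exp_mul_sub_of_entire hf hω hu hv huω hvω s t₁
  have hslope := (((hu.differentiable_slice (mem_univ t₁) x₁).hasDerivAt.sub
    (hv.differentiable_slice (mem_univ t₁) x₁).hasDerivAt).const_mul (exp (Λ * (t₁ - s))))
  have hzero := hz.datum_eq_zero_of_deriv_nonneg (x₁ := x₁) (sub_pos.2 hs) (by simpa using hup)
    (by simp [heq]) (by simpa using hslope)
    (mul_nonneg (exp_pos _).le (sub_nonneg.2 hderiv)) x
  simpa [sub_eq_zero] using hzero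

lemma eq_or_deriv_lt (hf : IsLocallyLipschitzInState f) (hω : Continuous ω)
    (hu : IsSolOn f u univ) (hv : IsSolOn f v univ) (huω : ∀ x t, u x t ∈ Icc 0 (ω t))
    (hvω : ∀ x t, v x t ∈ Icc 0 (ω t)) (hup : ∀ t, NoUpcrossing fun x ↦ u x t - v x t)
    (heq : u x₁ t₁ = v x₁ t₁) :
    (∀ x t, u x t = v x t) ∨ deriv (fun y ↦ u y t₁) x₁ < deriv (fun y ↦ v y t₁) x₁ := by
  refine or_iff_not_imp_right.2 fun hderiv x t ↦ ?_
  have hpast : ∀ s < t₁, ∀ x, u x s = v x s := fun s hs ↦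
    eq_of_lt_of_deriv_le hf hω hu hv huω hvω hs (hup s) heq (not_lt.1 hderiv)
  obtain ⟨s, hs⟩ := exists_lt (min t t₁)
  exact eq_of_le_of_forall_eq hf hω hu hv huω hvω (hs.le.trans (min_le_left t t₁))
    (hpast s (hs.trans_le (min_le_right t t₁))) x

end ZeroNumber

lemma IsSolOn.translate {f w : ℝ → ℝ → ℝ} {T : ℝ} (hw : IsSolOn f w univ)
    (hfT : Function.Periodic f T) (y : ℝ) (n : ℤ) :
    IsSolOn f (fun x t ↦ w (x + y) (t + n * T)) univ := by
  have hshift := hw.shift y (n * T) (mapsTo_univ (· + n * T) univ)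
  rwa [show (fun t ↦ f (t + n * T)) = f from funext (hfT.int_mul n)] at hshift

namespace IsOmegaLimitOrbit

variable {f u w₁ w : ℝ → ℝ → ℝ} {T α a : ℝ} {ω : ℝ → ℝ}

lemma exists_tendsto_translates (hw₁ : IsOmegaLimitOrbit f T u w₁) (hT : 0 < T) :
    ∃ (ξ : ℕ → ℝ) (k : ℕ → ℤ),
      (∀ x t, Tendsto (fun j ↦ u (x + ξ j) (t + k j * T)) atTop (𝓝 (w₁ x t))) ∧
      ∀ t : ℝ, ∀ᶠ j in atTop, 0 < t + k j * T := by
  obtain ⟨-, ξ, k, hk, hlim⟩ := hw₁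
  refine ⟨ξ, k, fun x t ↦ Metric.tendsto_atTop.2 fun ε hε ↦ ?_, fun t ↦ ?_⟩
  · obtain ⟨J, hJ⟩ := hlim {(x, t)} isCompact_singleton ε hε
    exact ⟨J, fun j hj ↦ (hJ j hj (x, t) rfl).1⟩
  · have htime : Tendsto (fun j ↦ t + k j * T) atTop atTop := tendsto_atTop_add_const_left _ t
      ((tendsto_intCast_atTop_atTop.comp hk).atTop_mul_const hT)
    exact htime.eventually_gt_atTop 0

lemma mem_Icc (hw₁ : IsOmegaLimitOrbit f T u w₁) (hT : 0 < T) (hωT : Function.Periodic ω T)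
    (huω : ∀ x, ∀ t > 0, u x t ∈ Icc 0 (ω t)) (x t : ℝ) : w₁ x t ∈ Icc 0 (ω t) := by
  obtain ⟨ξ, k, hlim, htime⟩ := hw₁.exists_tendsto_translates hT
  refine isClosed_Icc.mem_of_tendsto (hlim x t) ((htime t).mono fun j hj ↦ ?_)
  simpa only [hωT.int_mul (k j) t] using huω (x + ξ j) _ hj

lemma noUpcrossing_sub (hw₁ : IsOmegaLimitOrbit f T u w₁) (hu : IsHeavisideSol f α a ω u)
    (hT : 0 < T) (hf : IsLocallyLipschitzInState f) (hfT : Function.Periodic f T)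
    (hω : Continuous ω) (hωT : Function.Periodic ω T) (hω0 : ω 0 = α)
    (hw : IsSolOn f w univ) (hwω : ∀ x t, w x t ∈ Icc 0 (ω t)) (t : ℝ) :
    NoUpcrossing fun x ↦ w₁ x t - w x t := by
  obtain ⟨ξ, k, hlim, htime⟩ := hw₁.exists_tendsto_translates hT
  intro x y hxy hx
  have happrox : ∀ x, Tendsto (fun j ↦ u (x + ξ j) (t + k j * T) - w x t) atTop
      (𝓝 (w₁ x t - w x t)) := fun x ↦ (hlim x t).sub_const _
  refine le_of_tendsto (happrox y) ?_
  filter_upwards [(happrox x).eventually_lt_const hx, htime t] with j hneg hpos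
  have hback : ∀ z, w (z + ξ j + -ξ j) (t + k j * T + (-k j : ℤ) * T) = w z t := fun z ↦ by
    push_cast
    ring_nf
  have hup := hu.noUpcrossing_sub hf hω hω0
    ((hw.translate hfT (-ξ j) (-k j)).mono (subset_univ _))
    (fun z τ _ ↦ by simpa only [hωT.int_mul (-k j) τ] using hwω (z + -ξ j) (τ + (-k j : ℤ) * T))
    hpos (add_lt_add_left hxy (ξ j))
  simp only [hback] at hup
  exact hup hneg

end IsOmegaLimitOrbit

theorem omega_limit_orbit_steeper_general {f u w₁ w : ℝ → ℝ → ℝ} {T α a : ℝ} {ω : ℝ → ℝ}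
    (hT : 0 < T) (hf : IsLocallyLipschitzInState f) (hfT : Function.Periodic f T)
    (hω : Continuous ω) (hωT : Function.Periodic ω T) (hω0 : ω 0 = α)
    (hu : IsHeavisideSol f α a ω u) (hw₁ : IsOmegaLimitOrbit f T u w₁)
    (hw : IsSolOn f w univ) (hwω : ∀ x t, w x t ∈ Icc 0 (ω t)) : Steeper T w₁ w := by
  intro t₁ x₁ k heq
  have hwk : IsSolOn f (fun x t ↦ w x (t + k * T)) univ := by
    simpa only [add_zero] using hw.translate hfT 0 k
  have hwkω : ∀ x t, w x (t + k * T) ∈ Icc 0 (ω t) := fun x t ↦ by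
    simpa only [hωT.int_mul k t] using hwω x (t + k * T)
  have hup := hw₁.noUpcrossing_sub hu hT hf hfT hω hωT hω0 hwk hwkω
  exact (eq_or_deriv_lt hf hω hw₁.1 hwk (hw₁.mem_Icc hT hωT hu.2.1) hwkω hup heq).imp_left
    fun hall x t ↦ hall x (t + t₁)

/-- **Lemma 2.8.** Every ω-limit orbit of the Heaviside-type solution `ũ(·,·;a)` is steeper
than any entire solution `w` of (E) with `0 ≤ w ≤ ω(α,·)`. -/
theorem omega_limit_orbit_steeper
    (f : ℝ → ℝ → ℝ) (T α : ℝ) (ωsol : ℝ → ℝ → ℝ)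
    (hT : 0 < T)
    (hf : ContDiff ℝ 2 (Function.uncurry f))
    (hfper : ∀ t u : ℝ, f (t + T) u = f t u)
    (hf0 : ∀ t : ℝ, f t 0 = 0)
    (hωinit : ∀ β : ℝ, ωsol β 0 = β)
    (hωode : ∀ β t : ℝ, HasDerivAt (ωsol β) (f t (ωsol β t)) t)
    (hα : 0 < α) (hαfix : ωsol α T = α)
    (hαper : ∀ t : ℝ, ωsol α (t + T) = ωsol α t)
    (hαpos : ∀ t : ℝ, 0 < ωsol α t)
    (a : ℝ) (u w₁ : ℝ → ℝ → ℝ)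
    (hu : IsHeavisideSol f α a (ωsol α) u)
    (hw₁ : IsOmegaLimitOrbit f T u w₁) :
    ∀ w : ℝ → ℝ → ℝ, IsSolOn f w Set.univ →
      (∀ x t : ℝ, 0 ≤ w x t ∧ w x t ≤ ωsol α t) →
      Steeper T w₁ w := by
  have hω : Continuous (ωsol α) := continuous_iff_continuousAt.2 fun t ↦ (hωode α t).continuousAt
  exact fun w ↦ omega_limit_orbit_steeper_general hT
    (isLocallyLipschitzInState_of_contDiff (hf.of_le one_le_two)) (fun t ↦ funext (hfper t)) hω
    hαper (hωinit α) hu hw₁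

end
end

section
/- Let M = max_{t∈[0,T]} ω(α,t) and let K > 0 satisfy K ≥ max_{t∈[0,T], 0≤u≤M} |∂_u f(t,u)| (so that |f(t,u)| ≤ K u for all t ∈ ℝ and 0 ≤ u ≤ M). Then for every a ∈ ℝ, every x ∈ ℝ and every t > 0, ũ(x,t;a) ≤ min{ ω(α,t), α·e^{−√K (x − 2√K t − a)} }. In particular, for every c > 2√K, sup_{x ≥ ct} ũ(x,t;a) → 0 as t → ∞. -/
/-!
The reaction satisfies `f(t,v) ≤ K v` for `0 ≤ v ≤ ω(α,t)`, so `e^{-Kt} ũ` is a subsolution of the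
heat equation, while `e^{-Kt}` times the exponential `α e^{-λ(x - 2λt - a)}`, with `λ = √K`, solves
it exactly. The bound is therefore the weak maximum principle for bounded-above subsolutions on the
line. The barrier `ε (x² + 3t + 1)` confines a hypothetical violation to a compact set, and since it
is a strict supersolution no maximum can occur there. The jump of the datum at `x = a` does no harm
because the exponential is continuous there and `ũ ≤ ω(α,t) → α` as `t → 0⁺`.
-/

open Real Filter Topology Set

noncomputable section

lemma nonpos_of_hasDerivAt_hasDerivAt_of_isLocalMax {g g' : ℝ → ℝ} {g'' x : ℝ}
    (hg : ∀ᶠ y in 𝓝 x, HasDerivAt g (g' y) y) (hg' : HasDerivAt g' g'' x)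
    (hmax : IsLocalMax g x) : g'' ≤ 0 := by
  by_contra! hpos
  have hderiv : deriv g =ᶠ[𝓝 x] g' := hg.mono fun y hy => hy.deriv
  have hsecond : deriv (deriv g) x = g'' := hderiv.deriv_eq.trans hg'.deriv
  have hmin : IsLocalMin g x :=
    isLocalMin_of_deriv_deriv_pos (hsecond.symm ▸ hpos) hmax.deriv_eq_zero
      hg.self_of_nhds.continuousAt
  have hconst : g =ᶠ[𝓝 x] fun _ => g x := by
    filter_upwards [hmax, hmin] with y hle hge using le_antisymm hle hge
  have hzero : g'' = 0 := by
    rw [← hsecond, hconst.deriv.deriv_eq]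
    simp
  exact hpos.ne' hzero

lemma nonneg_of_hasDerivAt_of_isMaxOn_Icc_right {q : ℝ → ℝ} {q' d t : ℝ} (hq : HasDerivAt q q' t)
    (hdt : d < t) (hmax : IsMaxOn q (Icc d t) t) : 0 ≤ q' := by
  have hcone : d - t ∈ posTangentConeAt (Icc d t) t :=
    sub_mem_posTangentConeAt_of_segment_subset
      ((convex_Icc d t).segment_subset (right_mem_Icc.2 hdt.le) (left_mem_Icc.2 hdt.le))
  have hleft : (d - t) * q' ≤ 0 := by
    simpa using hmax.localize.hasFDerivWithinAt_nonpos hq.hasFDerivAt.hasFDerivWithinAt hcone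
  exact nonneg_of_mul_nonpos_right hleft (sub_neg.2 hdt)

lemma le_mul_of_deriv_le {g : ℝ → ℝ} {K M v : ℝ} (hg : Differentiable ℝ g) (hg0 : g 0 = 0)
    (hK : ∀ w ∈ Icc 0 M, deriv g w ≤ K) (hv : v ∈ Icc 0 M) : g v ≤ K * v := by
  have hmvt := (convex_Icc 0 M).image_sub_le_mul_sub_of_deriv_le hg.continuous.continuousOn
    hg.differentiableOn (fun w hw => hK w (interior_subset hw))
    0 (left_mem_Icc.2 (hv.1.trans hv.2)) v hv hv.1
  simpa [hg0] using hmvt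

lemma forall_of_periodic_of_forall_mem_Icc {β : Type*} {g : ℝ → β} {T : ℝ} {P : β → Prop}
    (hg : Function.Periodic g T) (hT : 0 < T) (hP : ∀ t ∈ Icc 0 T, P (g t)) (t : ℝ) :
    P (g t) := by
  obtain ⟨s, hs, hts⟩ := hg.exists_mem_Ico₀ hT t
  exact hts ▸ hP s (Ico_subset_Icc_self hs)

lemma reaction_le_mul_of_periodic {f : ℝ → ℝ → ℝ} {T K M : ℝ} (hper : Function.Periodic f T)
    (hT : 0 < T) (hf : ∀ t, Differentiable ℝ (f t)) (hf0 : ∀ t, f t 0 = 0)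
    (hK : ∀ t ∈ Icc 0 T, ∀ v ∈ Icc 0 M, deriv (f t) v ≤ K) :
    ∀ t, ∀ v ∈ Icc 0 M, f t v ≤ K * v :=
  forall_of_periodic_of_forall_mem_Icc (g := f) (P := fun g => ∀ v ∈ Icc 0 M, g v ≤ K * v) hper hT
    fun t ht _ hv => le_mul_of_deriv_le (hf t) (hf0 t) (hK t ht) hv

lemma IsSolOn.continuousOn_s9 {f u : ℝ → ℝ → ℝ} {I : Set ℝ} (h : IsSolOn f u I) (hI : IsOpen I) :
    ContinuousOn (fun p : ℝ × ℝ => u p.1 p.2) (univ ×ˢ I) := by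
  obtain ⟨ut, ux, uxx, hut, hux, -, cut, cux, -⟩ := h
  intro p hp
  have hnhds : univ ×ˢ I ∈ 𝓝 p := (isOpen_univ.prod hI).mem_nhds hp
  have hspan : Continuous fun c : ℝ => ContinuousLinearMap.toSpanSingleton ℝ c :=
    (ContinuousLinearMap.toSpanSingletonCLE (𝕜 := ℝ) (E := ℝ)).continuous
  have hstrict := hasStrictFDerivAt_uncurry_coprod (𝕜 := ℝ) (u := p) (f := u)
    (f₁ := fun x t => ContinuousLinearMap.toSpanSingleton ℝ (ux x t))
    (f₂ := fun x t => ContinuousLinearMap.toSpanSingleton ℝ (ut x t))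
    (by filter_upwards [hnhds] with q hq using (hux q.1 q.2 hq.2).hasFDerivAt)
    (by filter_upwards [hnhds] with q hq using (hut q.1 q.2 hq.2).hasFDerivAt)
    (hspan.continuousAt.comp (cux.continuousAt hnhds))
    (hspan.continuousAt.comp (cut.continuousAt hnhds))
  exact hstrict.continuousAt.continuousWithinAt

lemma exists_mem_Ioo_and_lt_of_barrier_le {w : ℝ → ℝ → ℝ} {τ C ε : ℝ}
    (hbdd : ∀ x, ∀ t ∈ Ioc 0 τ, w x t ≤ C)
    (hinit : ∀ S, IsCompact S → ∀ ε > 0, ∀ᶠ t in 𝓝[>] (0 : ℝ), ∀ x ∈ S, w x t < ε) (hε : 0 < ε) :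
    ∃ R, ∃ δ > 0, ∀ y, ∀ s ∈ Ioc 0 τ, ε * (y ^ 2 + 3 * s + 1) ≤ w y s →
      y ∈ Ioo (-R) R ∧ δ < s := by
  obtain ⟨R, hRC, hR⟩ : ∃ R : ℝ, C / ε < R ^ 2 ∧ 0 ≤ R :=
    (((tendsto_pow_atTop two_ne_zero).eventually_gt_atTop (C / ε)).and
      (eventually_ge_atTop 0)).exists
  have hspace : ∀ y, ∀ s ∈ Ioc 0 τ, ε * (y ^ 2 + 3 * s + 1) ≤ w y s → y ∈ Ioo (-R) R := by
    intro y s hs hys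
    have hlt : y ^ 2 + 3 * s + 1 < R ^ 2 :=
      ((le_div_iff₀' hε).2 (hys.trans (hbdd y s hs))).trans_lt hRC
    exact abs_lt.1 (abs_lt_of_sq_lt_sq (by linarith [hs.1]) hR)
  obtain ⟨δ, hδ, hsmall⟩ := mem_nhdsGT_iff_exists_Ioc_subset.1
    (hinit (Icc (-R) R) isCompact_Icc ε hε)
  refine ⟨R, δ, hδ, fun y s hs hys => ⟨hspace y s hs hys, ?_⟩⟩
  by_contra! hsδ
  have hlt : w y s < ε := hsmall ⟨hs.1, hsδ⟩ y (Ioo_subset_Icc_self (hspace y s hs hys))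
  have hge : ε ≤ ε * (y ^ 2 + 3 * s + 1) :=
    le_mul_of_one_le_right hε.le (by linarith [sq_nonneg y, hs.1])
  linarith

/-- `w` is a classical subsolution of the heat equation `w_t = w_xx` on `ℝ × I`, the notion to which
the maximum principle applies. Joint continuity of `w` is required, but no continuity of its
derivatives. -/
def IsHeatSubsolOn (w : ℝ → ℝ → ℝ) (I : Set ℝ) : Prop :=
  ContinuousOn (fun p : ℝ × ℝ => w p.1 p.2) (univ ×ˢ I) ∧
  ∃ wt wx wxx : ℝ → ℝ → ℝ,
    (∀ x, ∀ t ∈ I, HasDerivAt (fun s => w x s) (wt x t) t) ∧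
    (∀ x, ∀ t ∈ I, HasDerivAt (fun y => w y t) (wx x t) x) ∧
    (∀ x, ∀ t ∈ I, HasDerivAt (fun y => wx y t) (wxx x t) x) ∧
    ∀ x, ∀ t ∈ I, wt x t ≤ wxx x t

namespace IsHeatSubsolOn

variable {w w₁ w₂ : ℝ → ℝ → ℝ} {I J : Set ℝ} {τ C ε : ℝ}

lemma mono (h : IsHeatSubsolOn w J) (hIJ : I ⊆ J) : IsHeatSubsolOn w I := by
  obtain ⟨hcont, wt, wx, wxx, hwt, hwx, hwxx, hle⟩ := h
  exact ⟨hcont.mono (prod_mono_right hIJ), wt, wx, wxx, fun x t ht => hwt x t (hIJ ht),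
    fun x t ht => hwx x t (hIJ ht), fun x t ht => hwxx x t (hIJ ht), fun x t ht => hle x t (hIJ ht)⟩

lemma add (h₁ : IsHeatSubsolOn w₁ I) (h₂ : IsHeatSubsolOn w₂ I) :
    IsHeatSubsolOn (fun x t => w₁ x t + w₂ x t) I := by
  obtain ⟨hcont, wt, wx, wxx, hwt, hwx, hwxx, hle⟩ := h₁
  obtain ⟨kcont, vt, vx, vxx, kvt, kvx, kvxx, kle⟩ := h₂
  exact ⟨hcont.add kcont, fun x t => wt x t + vt x t, fun x t => wx x t + vx x t,
    fun x t => wxx x t + vxx x t, fun x t ht => (hwt x t ht).add (kvt x t ht),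
    fun x t ht => (hwx x t ht).add (kvx x t ht), fun x t ht => (hwxx x t ht).add (kvxx x t ht),
    fun x t ht => add_le_add (hle x t ht) (kle x t ht)⟩

lemma const_mul_exp (A l a : ℝ) (I : Set ℝ) :
    IsHeatSubsolOn (fun x t => A * exp (l * (x - a) + l ^ 2 * t)) I := by
  have hx (x t : ℝ) : HasDerivAt (fun y => exp (l * (y - a) + l ^ 2 * t))
      (l * exp (l * (x - a) + l ^ 2 * t)) x := by
    have hlin : HasDerivAt (fun y => l * (y - a) + l ^ 2 * t) l x := by
      simpa using (((hasDerivAt_id x).sub_const a).const_mul l).add_const (l ^ 2 * t)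
    simpa only [mul_comm] using hlin.exp
  have ht (x t : ℝ) : HasDerivAt (fun s => exp (l * (x - a) + l ^ 2 * s))
      (l ^ 2 * exp (l * (x - a) + l ^ 2 * t)) t := by
    have hlin : HasDerivAt (fun s => l * (x - a) + l ^ 2 * s) (l ^ 2) t := by
      simpa using ((hasDerivAt_id t).const_mul (l ^ 2)).const_add (l * (x - a))
    simpa only [mul_comm] using hlin.exp
  exact ⟨by fun_prop, _, _, _, fun x t _ => (ht x t).const_mul A,
    fun x t _ => (hx x t).const_mul A, fun x t _ => ((hx x t).const_mul l).const_mul A,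
    fun x t _ => le_of_eq (by ring)⟩

lemma not_isMaxOn_sub_barrier (h : IsHeatSubsolOn w I) (hε : 0 < ε) {b c d y s : ℝ}
    (hy : y ∈ Ioo b c) (hds : d < s) (hs : s ∈ I) :
    ¬ IsMaxOn (fun p : ℝ × ℝ => w p.1 p.2 - ε * (p.1 ^ 2 + 3 * p.2 + 1))
      (Icc b c ×ˢ Icc d s) (y, s) := by
  intro hmax
  obtain ⟨-, wt, wx, wxx, hwt, hwx, hwxx, hle⟩ := h
  have hbt : HasDerivAt (fun t => ε * (y ^ 2 + 3 * t + 1)) (ε * 3) s := by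
    simpa using ((((hasDerivAt_id s).const_mul 3).const_add (y ^ 2)).add_const 1).const_mul ε
  have hbx (x : ℝ) : HasDerivAt (fun x => ε * (x ^ 2 + 3 * s + 1)) (ε * (2 * x)) x := by
    simpa using (((hasDerivAt_pow 2 x).add_const (3 * s)).add_const 1).const_mul ε
  have hbxx : HasDerivAt (fun x => ε * (2 * x)) (ε * 2) y := by
    simpa using ((hasDerivAt_id y).const_mul 2).const_mul ε
  have htime : 0 ≤ wt y s - ε * 3 :=
    nonneg_of_hasDerivAt_of_isMaxOn_Icc_right ((hwt y s hs).sub hbt) hds fun t ht =>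
      hmax (mk_mem_prod (Ioo_subset_Icc_self hy) ht)
  have hspace : wxx y s - ε * 2 ≤ 0 :=
    nonpos_of_hasDerivAt_hasDerivAt_of_isLocalMax
      (.of_forall fun x => (hwx x s hs).sub (hbx x)) ((hwxx y s hs).sub hbxx) <| by
        filter_upwards [Icc_mem_nhds hy.1 hy.2] with x hx
        exact hmax (mk_mem_prod hx (right_mem_Icc.2 hds.le))
  linarith [hle y s hs]

lemma lt_barrier (h : IsHeatSubsolOn w (Ioc 0 τ)) (hbdd : ∀ x, ∀ t ∈ Ioc 0 τ, w x t ≤ C)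
    (hinit : ∀ S, IsCompact S → ∀ ε > 0, ∀ᶠ t in 𝓝[>] (0 : ℝ), ∀ x ∈ S, w x t < ε)
    (hε : 0 < ε) {x t : ℝ} (ht : t ∈ Ioc 0 τ) : w x t < ε * (x ^ 2 + 3 * t + 1) := by
  by_contra! hviol
  obtain ⟨R, δ, hδ, hconf⟩ := exists_mem_Ioo_and_lt_of_barrier_le hbdd hinit hε
  have hpos : Icc δ t ⊆ Ioc 0 τ := fun s hs => ⟨hδ.trans_le hs.1, hs.2.trans ht.2⟩
  have hmem : (x, t) ∈ Icc (-R) R ×ˢ Icc δ t :=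
    ⟨Ioo_subset_Icc_self (hconf x t ht hviol).1, (hconf x t ht hviol).2.le, le_rfl⟩
  have hcont : ContinuousOn (fun p : ℝ × ℝ => w p.1 p.2 - ε * (p.1 ^ 2 + 3 * p.2 + 1))
      (Icc (-R) R ×ˢ Icc δ t) :=
    (h.1.mono (prod_mono (subset_univ _) hpos)).sub (by fun_prop)
  obtain ⟨⟨y, s⟩, hys, hmax⟩ :=
    (isCompact_Icc.prod isCompact_Icc).exists_isMaxOn ⟨_, hmem⟩ hcont
  have hs : s ∈ Ioc 0 τ := hpos hys.2
  have hge : ε * (y ^ 2 + 3 * s + 1) ≤ w y s :=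
    sub_nonneg.1 ((sub_nonneg.2 hviol).trans (hmax hmem))
  exact h.not_isMaxOn_sub_barrier hε (hconf y s hs hge).1 (hconf y s hs hge).2 hs
    (hmax.on_subset (prod_mono_right (Icc_subset_Icc_right hys.2.2)))

theorem nonpos (h : IsHeatSubsolOn w (Ioc 0 τ)) (hbdd : ∀ x, ∀ t ∈ Ioc 0 τ, w x t ≤ C)
    (hinit : ∀ S, IsCompact S → ∀ ε > 0, ∀ᶠ t in 𝓝[>] (0 : ℝ), ∀ x ∈ S, w x t < ε)
    {x t : ℝ} (ht : t ∈ Ioc 0 τ) : w x t ≤ 0 := by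
  have hB : 0 < x ^ 2 + 3 * t + 1 := by linarith [sq_nonneg x, ht.1]
  refine le_of_forall_pos_le_add fun ε hε => ?_
  simpa [div_mul_cancel₀ ε hB.ne'] using (h.lt_barrier (x := x) hbdd hinit (div_pos hε hB) ht).le

end IsHeatSubsolOn

lemma IsSolOn.isHeatSubsolOn_exp_mul {f u : ℝ → ℝ → ℝ} {I : Set ℝ} {K : ℝ} (h : IsSolOn f u I)
    (hI : IsOpen I) (hf : ∀ x, ∀ t ∈ I, f t (u x t) ≤ K * u x t) :
    IsHeatSubsolOn (fun x t => exp (-K * t) * u x t) I := by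
  have hcont := h.continuousOn_s9 hI
  obtain ⟨ut, ux, uxx, hut, hux, huxx, -, -, -, heq⟩ := h
  have hexp (t : ℝ) : HasDerivAt (fun s => exp (-K * s)) (exp (-K * t) * -K) t := by
    simpa using ((hasDerivAt_id t).const_mul (-K)).exp
  refine ⟨ContinuousOn.mul (by fun_prop) hcont, _, _, _, fun x t ht => (hexp t).mul (hut x t ht),
    fun x t ht => (hux x t ht).const_mul _, fun x t ht => (huxx x t ht).const_mul _,
    fun x t ht => ?_⟩
  calc exp (-K * t) * -K * u x t + exp (-K * t) * ut x t
      = exp (-K * t) * (uxx x t + (f t (u x t) - K * u x t)) := by rw [heq x t ht]; ring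
    _ ≤ exp (-K * t) * uxx x t := by
      gcongr
      linarith [hf x t ht]

namespace IsHeavisideSol

variable {f u : ℝ → ℝ → ℝ} {α a : ℝ} {ω : ℝ → ℝ}

lemma eventually_lt_add (hu : IsHeavisideSol f α a ω u) (hω : Tendsto ω (𝓝[>] 0) (𝓝 α))
    {φ : ℝ → ℝ} (hφ : ContinuousAt φ a) (hφ0 : ∀ x, 0 ≤ φ x) (hφα : ∀ x ≤ a, α ≤ φ x)
    {S : Set ℝ} (hS : IsCompact S) {ε : ℝ} (hε : 0 < ε) :
    ∀ᶠ t in 𝓝[>] 0, ∀ x ∈ S, u x t < φ x + ε := by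
  obtain ⟨-, hbd, hinit⟩ := hu
  obtain ⟨b, hab, hb⟩ : ∃ b > a, ∀ x ∈ Ico a b, α - ε / 2 < φ x :=
    mem_nhdsGE_iff_exists_Ico_subset.1 <| nhdsWithin_le_nhds <|
      hφ.eventually_const_lt (by linarith [hφα a le_rfl])
  obtain ⟨δ, hδ, hfar⟩ := hinit (S ∩ Ici b) (hS.inter_right isClosed_Ici)
    (fun h => hab.not_ge h.2) ε hε
  filter_upwards [hω.eventually_lt_const (show α < α + ε / 2 by linarith), Ioo_mem_nhdsGT hδ]
    with t hωt ht x hx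
  rcases lt_or_ge x b with hxb | hbx
  · have hφx : α - ε / 2 < φ x := by
      rcases le_or_gt x a with hxa | hax
      · linarith [hφα x hxa]
      · exact hb x ⟨hax.le, hxb⟩
    linarith [(hbd x t ht.1).2]
  · have hux := hfar t ht x ⟨hx, hbx⟩
    rw [if_neg (by linarith), mul_zero, sub_zero] at hux
    linarith [lt_of_abs_lt hux, hφ0 x]

lemma eventually_lt_mul_exp_add (hu : IsHeavisideSol f α a ω u) (hω : Tendsto ω (𝓝[>] 0) (𝓝 α))
    (hα : 0 ≤ α) {l : ℝ} (hl : 0 ≤ l) {S : Set ℝ} (hS : IsCompact S) {ε : ℝ} (hε : 0 < ε) :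
    ∀ᶠ t in 𝓝[>] 0, ∀ x ∈ S, u x t < α * exp (-l * (x - a) + l ^ 2 * t) + ε := by
  have hdatum : ∀ x ≤ a, α ≤ α * exp (-l * (x - a)) := fun x hx =>
    le_mul_of_one_le_right hα
      (one_le_exp (mul_nonneg_of_nonpos_of_nonpos (neg_nonpos.2 hl) (sub_nonpos.2 hx)))
  filter_upwards [hu.eventually_lt_add hω (by fun_prop) (fun x => by positivity) hdatum hS hε,
    self_mem_nhdsWithin] with t hut ht x hx
  have hgrow : α * exp (-l * (x - a)) ≤ α * exp (-l * (x - a) + l ^ 2 * t) := by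
    gcongr
    exact le_add_of_nonneg_right (mul_nonneg (sq_nonneg l) (le_of_lt ht))
  linarith [hut x hx]

theorem le_mul_exp (hu : IsHeavisideSol f α a ω u) (hα : 0 ≤ α) (hω : ContinuousOn ω (Ici 0))
    (hω0 : ω 0 = α) {K l : ℝ} (hK : 0 ≤ K) (hl : 0 ≤ l)
    (hf : ∀ t > 0, ∀ v ∈ Icc 0 (ω t), f t v ≤ K * v) {x t : ℝ} (ht : 0 < t) :
    u x t ≤ α * exp (-l * (x - a) + (l ^ 2 + K) * t) := by
  obtain ⟨C, hC⟩ := (isCompact_Icc (a := 0) (b := t)).bddAbove_image (hω.mono Icc_subset_Ici_self)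
  have hωlim : Tendsto ω (𝓝[>] 0) (𝓝 α) :=
    hω0 ▸ (hω 0 self_mem_Ici).mono_left (nhdsWithin_mono 0 Ioi_subset_Ici_self)
  have hdecay : ∀ y, ∀ s > 0, exp (-K * s) * u y s ≤ u y s := fun y s hs =>
    mul_le_of_le_one_left (hu.2.1 y s hs).1 (exp_le_one_iff.2 (by nlinarith))
  have hsub : IsHeatSubsolOn
      (fun y s => exp (-K * s) * u y s + -α * exp (-l * (y - a) + l ^ 2 * s)) (Ioi 0) := by
    simpa only [neg_sq] using (hu.1.isHeatSubsolOn_exp_mul isOpen_Ioi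
      fun y s hs => hf s hs _ (hu.2.1 y s hs)).add (.const_mul_exp (-α) (-l) a _)
  have hnonpos := (hsub.mono Ioc_subset_Ioi_self).nonpos (C := C) (x := x) ?bounded ?initial
    (right_mem_Ioc.2 ht)
  · calc u x t = exp (K * t) * (exp (-K * t) * u x t) := by
          rw [← mul_assoc, ← exp_add, neg_mul, add_neg_cancel, exp_zero, one_mul]
      _ ≤ exp (K * t) * (α * exp (-l * (x - a) + l ^ 2 * t)) :=
          mul_le_mul_of_nonneg_left (by linarith) (exp_nonneg _)
      _ = α * exp (-l * (x - a) + (l ^ 2 + K) * t) := by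
          rw [mul_left_comm, ← exp_add]
          ring_nf
  case bounded =>
    intro y s hs
    have hωC : ω s ≤ C := hC (mem_image_of_mem ω (Ioc_subset_Icc_self hs))
    have hv : 0 ≤ α * exp (-l * (y - a) + l ^ 2 * s) := by positivity
    linarith [hdecay y s hs.1, (hu.2.1 y s hs.1).2]
  case initial =>
    intro S hS ε hε
    filter_upwards [hu.eventually_lt_mul_exp_add hωlim hα hl hS hε, self_mem_nhdsWithin]
      with s hus hs y hy
    linarith [hdecay y s hs, hus y hy]

end IsHeavisideSol

lemma eventually_forall_mul_exp_le {A l s c a ε : ℝ} (hA : 0 ≤ A) (hl : 0 < l) (hsc : s < c)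
    (hε : 0 < ε) : ∀ᶠ t in atTop, ∀ x, c * t ≤ x → A * exp (-l * (x - s * t - a)) ≤ ε := by
  have hlim : Tendsto (fun t => A * exp (-l * ((c - s) * t - a))) atTop (𝓝 0) := by
    have harg : Tendsto (fun t => (c - s) * t - a) atTop atTop :=
      tendsto_atTop_add_const_right _ _ (tendsto_id.const_mul_atTop (sub_pos.2 hsc))
    simpa using
      (tendsto_exp_atBot.comp (harg.const_mul_atTop_of_neg (neg_lt_zero.2 hl))).const_mul A
  filter_upwards [hlim.eventually_lt_const hε] with t ht x hx
  refine le_trans ?_ ht.le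
  gcongr A * exp ?_
  nlinarith

theorem exponential_supersolution_bound_general {f u : ℝ → ℝ → ℝ} {α a K : ℝ} {ω : ℝ → ℝ}
    (hα : 0 ≤ α) (hK : 0 < K) (hω : ContinuousOn ω (Ici 0)) (hω0 : ω 0 = α)
    (hf : ∀ t > 0, ∀ v ∈ Icc 0 (ω t), f t v ≤ K * v) (hu : IsHeavisideSol f α a ω u) :
    (∀ x t, 0 < t → u x t ≤ min (ω t) (α * exp (-√K * (x - 2 * √K * t - a)))) ∧
      ∀ c, 2 * √K < c → ∀ ε > 0, ∃ t₀, ∀ t ≥ t₀, ∀ x, c * t ≤ x → u x t ≤ ε := by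
  have hexp : ∀ x t, 0 < t → u x t ≤ α * exp (-√K * (x - 2 * √K * t - a)) := by
    intro x t ht
    have hexponent : -√K * (x - a) + (√K ^ 2 + K) * t = -√K * (x - 2 * √K * t - a) := by
      linear_combination -t * sq_sqrt hK.le
    exact hexponent ▸ hu.le_mul_exp hα hω hω0 hK.le (sqrt_nonneg K) hf ht
  refine ⟨fun x t ht => le_min (hu.2.1 x t ht).2 (hexp x t ht), fun c hc ε hε => ?_⟩
  refine eventually_atTop.1 ?_
  filter_upwards [eventually_forall_mul_exp_le hα (sqrt_pos.2 hK) hc hε, eventually_gt_atTop 0]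
    with t hfront ht x hx
  exact (hexp x t ht).trans (hfront x hx)

/-- Explicit supersolution estimate for the Heaviside-type solution: with
`M = max_{[0,T]} ω(α,·)` and `K ≥ max |∂_u f|` on `[0,T] × [0,M]`, one has
`ũ(x,t;a) ≤ min{ω(α,t), α e^{−√K (x − 2√K t − a)}}`; in particular the solution spreads to
the right with speed at most `2√K`. -/
theorem exponential_supersolution_bound
    (f : ℝ → ℝ → ℝ) (T α : ℝ) (ωsol : ℝ → ℝ → ℝ)
    (hT : 0 < T)
    (hf : ContDiff ℝ 2 (Function.uncurry f))
    (hfper : ∀ t u : ℝ, f (t + T) u = f t u)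
    (hf0 : ∀ t : ℝ, f t 0 = 0)
    (hωinit : ∀ β : ℝ, ωsol β 0 = β)
    (hωode : ∀ β t : ℝ, HasDerivAt (ωsol β) (f t (ωsol β t)) t)
    (hα : 0 < α) (hαfix : ωsol α T = α)
    (hαper : ∀ t : ℝ, ωsol α (t + T) = ωsol α t)
    (hαpos : ∀ t : ℝ, 0 < ωsol α t)
    (M K : ℝ)
    (hM : ∀ t ∈ Set.Icc 0 T, ωsol α t ≤ M)
    (hMmax : ∃ t₀ ∈ Set.Icc 0 T, ωsol α t₀ = M)
    (hK : 0 < K)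
    (hKbd : ∀ t ∈ Set.Icc 0 T, ∀ v ∈ Set.Icc 0 M, |deriv (fun w => f t w) v| ≤ K) :
    ∀ a : ℝ, ∀ u : ℝ → ℝ → ℝ, IsHeavisideSol f α a (ωsol α) u →
      (∀ x t : ℝ, 0 < t →
        u x t ≤ min (ωsol α t) (α * Real.exp (-Real.sqrt K * (x - 2 * Real.sqrt K * t - a)))) ∧
      (∀ c : ℝ, 2 * Real.sqrt K < c → ∀ ε > 0, ∃ t₀ : ℝ, ∀ t ≥ t₀, ∀ x : ℝ, c * t ≤ x →
        u x t ≤ ε) := by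
  have hωM : ∀ t, ωsol α t ≤ M :=
    forall_of_periodic_of_forall_mem_Icc (P := (· ≤ M)) hαper hT hM
  have hfdiff (t : ℝ) : Differentiable ℝ (f t) :=
    (hf.differentiable two_ne_zero).comp (by fun_prop : Differentiable ℝ fun w => (t, w))
  have hfK : ∀ t, ∀ v ∈ Icc 0 M, f t v ≤ K * v :=
    reaction_le_mul_of_periodic (fun t => funext (hfper t)) hT hfdiff hf0
      fun t ht v hv => (abs_le.1 (hKbd t ht v hv)).2
  exact fun a u hu => exponential_supersolution_bound_general hα.le hK
    (fun t _ => (hωode α t).continuousAt.continuousWithinAt) (hωinit α)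
    (fun t _ v hv => hfK t v (Icc_subset_Icc_right (hωM t) hv)) hu

end
end
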